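/- arXiv:1609.02083 — 2 statements merged into one kernel-verified Lean document; each statement's English description precedes it below -/
import Mathlib

section
/- Let (R, m) be a Noetherian local ring with depth(m) ≥ 3, and let n, l be positive integers with either (a) l ≥ 3 and n ≥ 2, or (b) n = 1 and l > 0 even. Then there exists an ideal I ⊆ R of grade 3 such that R/I has a minimal free resolution of the form 0 → R^n → R^{n+l} → R^{l+1} → R. -/
/-!
The construction is by biliaison in two stages, starting from the Koszul complex on a regular
sequence of length three in the maximal ideal. Exactness is followed by hand through every step,
by elementwise diagram chases.

*Type one.* A self-dual resolution `0 → R → R^(l+1) → R^(l+1) → R` has an alternating middle map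
`A` and outer maps given by a vector `p` of generators (`Gor`). If three of the generators
`p i, p j, p k` form a regular sequence, then bordering `A` by the columns `p i eᵢ`, `p j eⱼ` and
the entry `p k` gives such a resolution of size `l + 3` (`Gor.step`). Modulo the complete
intersection `(p i ^ 2, p j ^ 2)` its ideal is the image of the old one under an injective map
`p k - ψ`, so exactness passes on. The new resolution again has three regular generators. This
gives all even `l`.

*Higher type.* Let `a, b` be two generators of `I` and `z` regular modulo `(a, b)`. The ideal
`z I + (a, b)` has a resolution with one more summand in homological degrees two and three
(`IsRes.biliaison`), the number of generators being unchanged. It is minimal when the Koszul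
relation of `a, b` is not a minimal syzygy of `I`, i.e. when `a, b` have product zero in the Tor
algebra (`Nul`). To iterate, four generators `i, j, k, h` are kept with the products `i j` and
`j k` zero. After the step on `i, j` the product `j k` is still zero, and `k h` has become zero
because both generators were multiplied by `z`; replacing `z gₖ` by `z gₖ + gᵢ ^ 2` makes `j, k` a
regular pair, and the pattern is back with the four generators rotated (`Ready.step`).

*Starting points.* For even `l ≥ 4` the bordered resolutions of type one satisfy the conditions on
products (`Gor.step_ready`). For odd `l ≥ 3` one takes the resolution of type one with `l`
generators and adjoins the redundant generator `p j ^ 2`, all of whose products vanish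
(`Gor.ready_redundant`); the unit entry this introduces in the middle map is multiplied by `z` in
the first biliaison.
-/

/-- `x 0, x 1, …` is a regular sequence on `R`. -/
def IsRegSeq {R : Type*} [CommRing R] {k : ℕ} (x : Fin k → R) : Prop :=
  ∀ i : Fin k, IsSMulRegular
    (R ⧸ Ideal.span (Set.range fun j : Fin (i : ℕ) => x ⟨(j : ℕ), j.isLt.trans i.isLt⟩))
    (x i)

/-- The ideal `I` has grade at least `k`. -/
def GradeGE {R : Type*} [CommRing R] (I : Ideal R) (k : ℕ) : Prop :=
  ∃ x : Fin k → R, (∀ i, x i ∈ I) ∧ IsRegSeq x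

/-! ### Regular sequences of length three -/

section RegularTriples

variable {R : Type*} [CommRing R]

/-- `a, b, c` is a (weakly) regular sequence, spelled out elementwise. -/
structure Reg3 (a b c : R) : Prop where
  one : ∀ t, a * t = 0 → t = 0
  two : ∀ t s, b * t = a * s → ∃ r, t = a * r
  three : ∀ t s u, c * t = a * s + b * u → ∃ α β, t = a * α + b * β

theorem Reg3.koszul {a b c : R} (h : Reg3 a b c) {s u : R} (hs : a * s + b * u = 0) :
    ∃ r, s = b * r ∧ u = -(a * r) := by
  obtain ⟨r, rfl⟩ := h.two u (-s) (by linear_combination hs)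
  refine ⟨-r, ?_, by ring⟩
  have := h.one (s + b * r) (by linear_combination hs)
  linear_combination this

theorem Reg3.mul_third {a b c d : R} (h : Reg3 a b c) (h' : Reg3 a b d) : Reg3 a b (c * d) := by
  refine ⟨h.one, h.two, fun t s u e => ?_⟩
  obtain ⟨α, β, e'⟩ := h.three (d * t) s u (by linear_combination e)
  exact h'.three t α β e'

theorem Reg3.pow_third {a b c : R} (h : Reg3 a b c) (n : ℕ) : Reg3 a b (c ^ n) := by
  induction n with
  | zero => exact ⟨h.one, h.two, fun t s u e => ⟨s, u, by simpa using e⟩⟩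
  | succ n ih => rw [pow_succ]; exact ih.mul_third h

theorem Reg3.add_third {a b c : R} (h : Reg3 a b c) (s u : R) :
    Reg3 a b (c + (a * s + b * u)) := by
  refine ⟨h.one, h.two, fun t s' u' e => ?_⟩
  exact h.three t (s' - s * t) (u' - u * t) (by linear_combination e)

theorem Reg3.neg_third {a b c : R} (h : Reg3 a b c) : Reg3 a b (-c) := by
  refine ⟨h.one, h.two, fun t s' u' e => ?_⟩
  exact h.three t (-s') (-u') (by linear_combination -e)

/-- Adding to a regular element one whose square vanishes keeps it regular:
`(c + v) (c - v) = c ^ 2` modulo `(a, b)`. -/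
theorem Reg3.add_nilpotent {a b c v s u : R} (h : Reg3 a b c) (hv : v * v = a * s + b * u) :
    Reg3 a b (c + v) := by
  refine ⟨h.one, h.two, fun t s' u' e => ?_⟩
  exact (h.mul_third h).three t (s' * (c - v) + s * t) (u' * (c - v) + u * t)
    (by linear_combination (c - v) * e + t * hv)

variable [IsNoetherianRing R] [IsLocalRing R]

open IsLocalRing in
theorem le_of_le_sup_mul {K N : Ideal R} {c : R} (hc : c ∈ maximalIdeal R)
    (h : ∀ t ∈ K, ∃ s ∈ N, ∃ u ∈ K, t = s + c * u) : K ≤ N := by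
  refine Submodule.le_of_le_smul_of_le_jacobson_bot (I := maximalIdeal R)
    (IsNoetherian.noetherian K) (jacobson_eq_maximalIdeal ⊥ bot_ne_top).ge fun t ht => ?_
  obtain ⟨s, hs, u, hu, rfl⟩ := h t ht
  exact Submodule.add_mem_sup hs (Submodule.smul_mem_smul hc hu)

open IsLocalRing in
theorem Reg3.swap12 {a b c : R} (h : Reg3 a b c) (ha : a ∈ maximalIdeal R) : Reg3 b a c := by
  have hb : ∀ t, b * t = 0 → t = 0 := by
    have : (Submodule.torsionBy R R b : Ideal R) ≤ ⊥ := by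
      refine le_of_le_sup_mul ha fun t ht => ?_
      have ht : b * t = 0 := by simpa using ht
      obtain ⟨r, rfl⟩ := h.two t 0 (by simpa using ht)
      refine ⟨0, zero_mem _, r, ?_, by ring⟩
      have := h.one (b * r) (by linear_combination ht)
      simpa using this
    intro t ht
    simpa using this (show t ∈ Submodule.torsionBy R R b by simpa using ht)
  refine ⟨hb, fun t s e => ?_, fun t s u e => ?_⟩
  · obtain ⟨r, rfl⟩ := h.two s t e.symm
    exact ⟨r, by linear_combination h.one (t - b * r) (by linear_combination e)⟩
  · obtain ⟨α, β, rfl⟩ := h.three t u s (by linear_combination e)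
    exact ⟨β, α, by ring⟩

open IsLocalRing in
theorem Reg3.swap23 {a b c : R} (h : Reg3 a b c) (hb : b ∈ maximalIdeal R) : Reg3 a c b := by
  have hc : ∀ t s, c * t = a * s → ∃ r, t = a * r := by
    have : Submodule.comap (LinearMap.mulLeft R c) (Ideal.span {a}) ≤ Ideal.span {a} := by
      refine le_of_le_sup_mul hb fun t ht => ?_
      obtain ⟨s, hs⟩ := Ideal.mem_span_singleton'.1 ht
      simp only [LinearMap.mulLeft_apply] at hs
      obtain ⟨α, β, rfl⟩ := h.three t s 0 (by linear_combination -hs)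
      refine ⟨a * α, Ideal.mul_mem_right _ _ (Ideal.mem_span_singleton_self a), β, ?_, rfl⟩
      obtain ⟨r, hr⟩ := h.two (c * β) (s - c * α) (by linear_combination -hs)
      exact Ideal.mem_span_singleton'.2 ⟨r, by simp [hr, mul_comm]⟩
    intro t s e
    obtain ⟨r, hr⟩ := Ideal.mem_span_singleton'.1
      (this (show t ∈ Submodule.comap (LinearMap.mulLeft R c) (Ideal.span {a}) from
        Ideal.mem_span_singleton'.2 ⟨s, by simp [e, mul_comm]⟩))
    exact ⟨r, by rw [← hr, mul_comm]⟩
  refine ⟨h.one, hc, fun t s u e => ?_⟩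
  -- `c * u ∈ (a, b)` forces `u ∈ (a, b)`, and then `b * (t - c * β) ∈ (a)`
  obtain ⟨α, β, rfl⟩ := h.three u (-s) t (by linear_combination -e)
  obtain ⟨r, hr⟩ := h.two (t - c * β) (s + c * α) (by linear_combination e)
  exact ⟨r, β, by linear_combination hr⟩

end RegularTriples

theorem Reg3.isRegSeq {R : Type*} [CommRing R] {a b c : R} (h : Reg3 a b c) :
    IsRegSeq ![a, b, c] := by
  intro i
  rw [isSMulRegular_iff_right_eq_zero_of_smul]
  intro q
  obtain ⟨t, rfl⟩ := Ideal.Quotient.mk_surjective q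
  rw [Algebra.smul_def, Ideal.Quotient.algebraMap_eq, ← map_mul, Ideal.Quotient.eq_zero_iff_mem,
    Ideal.Quotient.eq_zero_iff_mem]
  fin_cases i
  · have : (Set.range fun j : Fin 0 => ![a, b, c] ⟨(j : ℕ), by omega⟩) = ∅ := Set.range_eq_empty _
    intro ht
    simp at ht ⊢
    exact h.one t ht
  · have : (Set.range fun j : Fin 1 => ![a, b, c] ⟨(j : ℕ), by omega⟩) = {a} := by
      ext y; simp
    intro ht
    change _ ∈ Ideal.span (Set.range fun j : Fin 1 => ![a, b, c] ⟨(j : ℕ), by omega⟩) at ht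
    change _ ∈ Ideal.span (Set.range fun j : Fin 1 => ![a, b, c] ⟨(j : ℕ), by omega⟩)
    rw [this, Ideal.mem_span_singleton'] at ht ⊢
    obtain ⟨s, hs⟩ := ht
    obtain ⟨r, hr⟩ := h.two t s (by simpa [mul_comm] using hs.symm)
    exact ⟨r, by rw [hr, mul_comm]⟩
  · have : (Set.range fun j : Fin 2 => ![a, b, c] ⟨(j : ℕ), by omega⟩) = {a, b} := by
      ext y; simp [Fin.exists_fin_two, eq_comm]
    intro ht
    change _ ∈ Ideal.span (Set.range fun j : Fin 2 => ![a, b, c] ⟨(j : ℕ), by omega⟩) at ht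
    change _ ∈ Ideal.span (Set.range fun j : Fin 2 => ![a, b, c] ⟨(j : ℕ), by omega⟩)
    rw [this, Ideal.mem_span_pair] at ht ⊢
    obtain ⟨s, u, hs⟩ := ht
    obtain ⟨α, β, hr⟩ := h.three t s u
      (by have : c * t = s * a + u * b := by simpa using hs.symm
          linear_combination this)
    exact ⟨α, β, by rw [hr]; ring⟩

theorem IsRegSeq.reg3 {R : Type*} [CommRing R] {x : Fin 3 → R} (h : IsRegSeq x) :
    Reg3 (x 0) (x 1) (x 2) := by
  have key : ∀ (i : Fin 3) (t : R),
      x i * t ∈ Ideal.span (Set.range fun j : Fin (i : ℕ) => x ⟨(j : ℕ), j.isLt.trans i.isLt⟩) →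
      t ∈ Ideal.span (Set.range fun j : Fin (i : ℕ) => x ⟨(j : ℕ), j.isLt.trans i.isLt⟩) := by
    intro i t ht
    have := (isSMulRegular_iff_right_eq_zero_of_smul.1 (h i)) (Ideal.Quotient.mk _ t)
    rw [Algebra.smul_def, Ideal.Quotient.algebraMap_eq, ← map_mul, Ideal.Quotient.eq_zero_iff_mem,
      Ideal.Quotient.eq_zero_iff_mem] at this
    exact this ht
  have h1 : (Set.range fun j : Fin 1 => x ⟨(j : ℕ), by omega⟩) = {x 0} := by
    ext y; simp
  have h2 : (Set.range fun j : Fin 2 => x ⟨(j : ℕ), by omega⟩) = {x 0, x 1} := by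
    ext y; simp [Fin.exists_fin_two, eq_comm]
  refine ⟨fun t ht => ?_, fun t s e => ?_, fun t s u e => ?_⟩
  · have := key 0 t (by rw [ht]; exact zero_mem _)
    simpa using this
  · have := key 1 t (by
      change _ ∈ Ideal.span (Set.range fun j : Fin 1 => x ⟨(j : ℕ), by omega⟩)
      rw [h1, Ideal.mem_span_singleton']; exact ⟨s, by rw [e, mul_comm]⟩)
    change _ ∈ Ideal.span (Set.range fun j : Fin 1 => x ⟨(j : ℕ), by omega⟩) at this
    rw [h1, Ideal.mem_span_singleton'] at this
    obtain ⟨r, hr⟩ := this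
    exact ⟨r, by rw [← hr, mul_comm]⟩
  · have := key 2 t (by
      change _ ∈ Ideal.span (Set.range fun j : Fin 2 => x ⟨(j : ℕ), by omega⟩)
      rw [h2, Ideal.mem_span_pair]; exact ⟨s, u, by rw [e]; ring⟩)
    change _ ∈ Ideal.span (Set.range fun j : Fin 2 => x ⟨(j : ℕ), by omega⟩) at this
    rw [h2, Ideal.mem_span_pair] at this
    obtain ⟨α, β, hr⟩ := this
    exact ⟨α, β, by rw [← hr]; ring⟩

/-! ### Biliaison -/

section Complexes

variable {R : Type*} [CommRing R] {ι J K : Type}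

/-- `0 → R^K → R^J → R^ι → R` is an exact complex of free modules. -/
structure IsRes (e1 : (ι → R) →ₗ[R] R) (e2 : (J → R) →ₗ[R] (ι → R))
    (e3 : (K → R) →ₗ[R] (J → R)) : Prop where
  inj : ∀ u, e3 u = 0 → u = 0
  ex2 : ∀ t, e2 t = 0 → ∃ u, t = e3 u
  ex1 : ∀ s, e1 s = 0 → ∃ t, s = e2 t
  c2 : ∀ u, e2 (e3 u) = 0
  c1 : ∀ t, e1 (e2 t) = 0

section IsRes

variable {e1 : (ι → R) →ₗ[R] R} {e2 : (J → R) →ₗ[R] (ι → R)} {e3 : (K → R) →ₗ[R] (J → R)}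

theorem IsRes.koszul (h : IsRes e1 e2 e3) (f f' : ι → R) :
    ∃ κ, e2 κ = e1 f' • f - e1 f • f' := by
  obtain ⟨t, ht⟩ := h.ex1 (e1 f' • f - e1 f • f') (by simp; ring)
  exact ⟨t, ht.symm⟩

theorem IsRes.conj (h : IsRes e1 e2 e3) (E : (ι → R) ≃ₗ[R] (ι → R)) :
    IsRes (e1 ∘ₗ E.toLinearMap) (E.symm.toLinearMap ∘ₗ e2) e3 := by
  refine ⟨h.inj, fun t ht => h.ex2 t (by simpa using ht), fun s hs => ?_, fun u => by simp [h.c2],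
    fun t => by simp [h.c1]⟩
  obtain ⟨t, ht⟩ := h.ex1 (E s) (by simpa using hs)
  exact ⟨t, by simp [← ht]⟩

end IsRes

/-- The Koszul relation between `e1 f` and `e1 f'` is not a minimal syzygy: it lifts along `e2` to
a vector with entries in the maximal ideal. Equivalently, the product of the classes of `f` and
`f'` in the Tor algebra of `R ⧸ I` vanishes. -/
def Nul [IsLocalRing R] (e1 : (ι → R) →ₗ[R] R) (e2 : (J → R) →ₗ[R] (ι → R)) (f f' : ι → R) :
    Prop :=
  ∃ κ : J → R, (∀ x, κ x ∈ IsLocalRing.maximalIdeal R) ∧ e2 κ = e1 f' • f - e1 f • f'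

section Nul

variable [IsLocalRing R] {e1 : (ι → R) →ₗ[R] R} {e2 : (J → R) →ₗ[R] (ι → R)}
  {e3 : (K → R) →ₗ[R] (J → R)} {f f' : ι → R}

theorem Nul.symm (h : Nul e1 e2 f f') : Nul e1 e2 f' f := by
  obtain ⟨κ, hκ, e⟩ := h
  exact ⟨-κ, fun x => neg_mem (hκ x), by rw [map_neg, e]; abel⟩

theorem Nul.add_smul (hn : Nul e1 e2 f f') (h : IsRes e1 e2 e3) {r : R}
    (hr : r ∈ IsLocalRing.maximalIdeal R) (f'' : ι → R) : Nul e1 e2 f (f' + r • f'') := by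
  obtain ⟨κ, hκ, e⟩ := hn
  obtain ⟨τ, hτ⟩ := h.koszul f f''
  refine ⟨κ + r • τ, fun x => add_mem (hκ x) (Ideal.mul_mem_right _ _ hr), ?_⟩
  rw [map_add, map_smul, e, hτ, map_add, map_smul]
  ext x
  simp
  ring

theorem Nul.conj (E : (ι → R) ≃ₗ[R] (ι → R)) (hn : Nul e1 e2 (E f) (E f')) :
    Nul (e1 ∘ₗ E.toLinearMap) (E.symm.toLinearMap ∘ₗ e2) f f' := by
  obtain ⟨κ, hκ, e⟩ := hn
  exact ⟨κ, hκ, by simp [e]⟩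

end Nul

/-- Multiplication by `z` on the coordinates in `S`. -/
def scaleOn (S : Set ι) [DecidablePred (· ∈ S)] (z : R) : (ι → R) →ₗ[R] (ι → R) where
  toFun s x := if x ∈ S then z * s x else s x
  map_add' s t := by ext x; by_cases hx : x ∈ S <;> simp [hx, mul_add]
  map_smul' r t := by ext x; by_cases hx : x ∈ S <;> simp [hx]; ring

/-- The map `(t, r) ↦ f t + r • v` on `R^J × R`. -/
def addCol {M : Type*} [AddCommGroup M] [Module R M] (f : (J → R) →ₗ[R] M) (v : M) :
    (Option J → R) →ₗ[R] M where
  toFun t := f (fun x => t (some x)) + t none • v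
  map_add' s t := by
    have : (fun x => (s + t) (some x)) = (fun x => s (some x)) + fun x => t (some x) := rfl
    rw [this, map_add, Pi.add_apply, add_smul]; abel
  map_smul' r t := by
    have : (fun x => (r • t) (some x)) = r • (fun x => t (some x)) := rfl
    rw [this, map_smul]; simp [smul_smul]

/-- The map `f` into `R^J`, extended by a new coordinate given by `g`. -/
def addRow {M : Type*} [AddCommGroup M] [Module R M] (f : M →ₗ[R] (J → R)) (g : M →ₗ[R] R) :
    M →ₗ[R] (Option J → R) where
  toFun u := fun o => o.elim (g u) (f u)
  map_add' s t := by ext (_ | x) <;> simp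
  map_smul' r t := by ext (_ | x) <;> simp

@[simp] theorem addRow_none {M : Type*} [AddCommGroup M] [Module R M] (f : M →ₗ[R] (J → R))
    (g : M →ₗ[R] R) (u : M) : addRow f g u none = g u := rfl

@[simp] theorem addRow_some {M : Type*} [AddCommGroup M] [Module R M] (f : M →ₗ[R] (J → R))
    (g : M →ₗ[R] R) (u : M) (x : J) : addRow f g u (some x) = f u x := rfl

variable [DecidableEq ι]

/-- The transvection `e_k ↦ e_k + r e_i` of `R^ι`. -/
def shear (i k : ι) (hik : i ≠ k) (r : R) : (ι → R) ≃ₗ[R] (ι → R) where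
  toFun s := s + (r * s k) • Pi.single i 1
  invFun s := s - (r * s k) • Pi.single i 1
  left_inv s := by ext x; simp [hik.symm]
  right_inv s := by ext x; simp [hik.symm]
  map_add' s t := by ext x; simp; ring
  map_smul' c t := by ext x; simp; ring

theorem decomp (i j : ι) (hij : i ≠ j) (s : ι → R) : ∃ s0 : ι → R, s0 i = 0 ∧ s0 j = 0 ∧
    (∀ x, x ≠ i → x ≠ j → s0 x = s x) ∧
    s = s0 + s i • Pi.single i 1 + s j • Pi.single j 1 := by
  refine ⟨s - s i • Pi.single i 1 - s j • Pi.single j 1, by simp [hij], by simp [hij.symm],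
    fun x hi hj => by simp [hi, hj], by abel⟩

instance (i j : ι) : DecidablePred (· ∈ ({i, j} : Set ι)) :=
  fun x => inferInstanceAs (Decidable (x = i ∨ x = j))

instance (i j : ι) : DecidablePred (· ∈ ({i, j}ᶜ : Set ι)) :=
  fun x => inferInstanceAs (Decidable (¬ (x = i ∨ x = j)))

/-- The resolution of `z I + (a, b)`: the mapping cone of the map from the Koszul complex of
`(a, b)` to the resolutions of `I` and `(a, b)`, after cancelling the generators `a, b` of `I`. -/
theorem IsRes.biliaison {e1 : (ι → R) →ₗ[R] R} {e2 : (J → R) →ₗ[R] (ι → R)}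
    {e3 : (K → R) →ₗ[R] (J → R)} (H : IsRes e1 e2 e3) {i j : ι} (hij : i ≠ j) {z : R}
    (reg : Reg3 (e1 (Pi.single i 1)) (e1 (Pi.single j 1)) z) {κ : J → R}
    (hκ : e2 κ = e1 (Pi.single j 1) • Pi.single i 1 - e1 (Pi.single i 1) • Pi.single j 1) :
    IsRes (e1 ∘ₗ scaleOn ({i, j}ᶜ : Set ι) z)
      (addCol (scaleOn ({i, j} : Set ι) z ∘ₗ e2) (e2 κ))
      (addRow (addCol e3 κ) (-z • LinearMap.proj none)) := by
  set a := e1 (Pi.single i 1) with ha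
  set b := e1 (Pi.single j 1) with hb
  have Di : scaleOn ({i, j} : Set ι) z (Pi.single i 1) = z • Pi.single i 1 := by
    ext x; by_cases hx : x = i <;> simp [scaleOn, hx]
  have Dj : scaleOn ({i, j} : Set ι) z (Pi.single j 1) = z • Pi.single j 1 := by
    ext x; by_cases hx : x = j <;> simp [scaleOn, hx]
  have Di' : scaleOn ({i, j}ᶜ : Set ι) z (Pi.single i 1) = Pi.single i 1 := by
    ext x; by_cases hx : x = i <;> simp [scaleOn, hx]
  have Dj' : scaleOn ({i, j}ᶜ : Set ι) z (Pi.single j 1) = Pi.single j 1 := by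
    ext x; by_cases hx : x = j <;> simp [scaleOn, hx]
  have D0 : ∀ s : ι → R, s i = 0 → s j = 0 → scaleOn ({i, j} : Set ι) z s = s := by
    intro s h1 h2
    ext x
    by_cases hx : x = i
    · simp [scaleOn, hx, h1]
    · by_cases hx' : x = j <;> simp [scaleOn, hx, hx', h2]
  have D0' : ∀ s : ι → R, s i = 0 → s j = 0 → scaleOn ({i, j}ᶜ : Set ι) z s = z • s := by
    intro s h1 h2
    ext x
    by_cases hx : x = i
    · simp [scaleOn, hx, h1]
    · by_cases hx' : x = j <;> simp [scaleOn, hx, hx', h2]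
  have DD : ∀ s, scaleOn ({i, j}ᶜ : Set ι) z (scaleOn ({i, j} : Set ι) z s) = z • s := by
    intro s
    ext x
    by_cases hx : x = i <;> by_cases hx' : x = j <;> simp [scaleOn, hx, hx']
  have c1 : ∀ t, e1 (scaleOn ({i, j}ᶜ : Set ι) z (addCol (scaleOn ({i, j} : Set ι) z ∘ₗ e2)
      (e2 κ) t)) = 0 := by
    intro t
    simp only [addCol, LinearMap.coe_mk, AddHom.coe_mk, LinearMap.comp_apply, map_add, DD,
      map_smul, H.c1, hκ, map_sub, Di', Dj', ← ha, ← hb]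
    simp; ring
  refine ⟨fun u hu => ?_, fun t ht => ?_, fun s hs => ?_, fun u => ?_, c1⟩
  · have h1 : ∀ x, addCol e3 κ u x = 0 := fun x => congrFun hu (some x)
    have h1 : e3 (fun x => u (some x)) + u none • κ = 0 := funext h1
    have h2 := congrArg e2 h1
    rw [map_add, H.c2, map_smul, hκ] at h2
    have h3 := congrFun h2 j
    simp [hij] at h3
    have h4 : u none = 0 := reg.one _ (by linear_combination h3)
    rw [h4, zero_smul, add_zero] at h1
    have h5 := H.inj _ h1
    ext (_ | x)
    · exact h4
    · exact congrFun h5 x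
  · set t0 : J → R := fun x => t (some x) with ht0
    set r := t none with hr
    have ht' : scaleOn ({i, j} : Set ι) z (e2 t0) + r • e2 κ = 0 := ht
    obtain ⟨s0, h0i, h0j, h0, hs⟩ := decomp i j hij (e2 t0)
    have hs0 : s0 = 0 := by
      ext x
      by_cases hi : x = i
      · rw [hi, h0i]; rfl
      by_cases hj : x = j
      · rw [hj, h0j]; rfl
      have := congrFun ht' x
      rw [h0 x hi hj]
      simpa [scaleOn, hi, hj, hκ] using this
    rw [hs0, zero_add] at hs
    have e := H.c1 t0
    rw [hs] at e
    simp only [map_add, map_smul, ← ha, ← hb, smul_eq_mul] at e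
    obtain ⟨q, hq1, hq2⟩ := reg.koszul (s := e2 t0 i) (u := e2 t0 j) (by linear_combination e)
    have hj := congrFun ht' j
    simp [scaleOn, hκ, hij, hq2] at hj
    have hrz : r = -(z * q) := by
      have := reg.one (r + z * q) (by linear_combination -hj)
      linear_combination this
    obtain ⟨u, hu⟩ := H.ex2 (t0 - q • κ) (by
      rw [map_sub, map_smul, hs, hq1, hq2, hκ]; ext x; simp; ring)
    refine ⟨fun o => o.elim q u, ?_⟩
    ext (_ | x)
    · change r = _
      rw [hrz]; simp
    · have := congrFun hu x
      simp only [Pi.sub_apply, Pi.smul_apply, smul_eq_mul] at this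
      change t0 x = _
      simp [addCol]
      linear_combination this
  · obtain ⟨s0, h0i, h0j, h0, hs'⟩ := decomp i j hij s
    set σ := s i
    set τ := s j
    have e : a * σ + b * τ + z * e1 s0 = 0 := by
      have : e1 (scaleOn ({i, j}ᶜ : Set ι) z s) = 0 := hs
      rw [hs'] at this
      simp only [map_add, map_smul, Di', Dj', D0' s0 h0i h0j, ← ha, ← hb, smul_eq_mul] at this
      linear_combination this
    obtain ⟨α, β, hαβ⟩ := reg.three (e1 s0) (-σ) (-τ) (by linear_combination e)
    obtain ⟨t, ht⟩ := H.ex1 (s0 - α • Pi.single i 1 - β • Pi.single j 1) (by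
      simp only [map_sub, map_smul, ← ha, ← hb, smul_eq_mul]; linear_combination hαβ)
    obtain ⟨r, hr1, hr2⟩ := reg.koszul (s := σ + z * α) (u := τ + z * β)
      (by linear_combination e - z * hαβ)
    refine ⟨fun o => o.elim r t, ?_⟩
    change s = scaleOn ({i, j} : Set ι) z (e2 t) + r • e2 κ
    rw [← ht, map_sub, map_sub, map_smul, map_smul, Di, Dj, D0 s0 h0i h0j, hκ, hs']
    have h1 : σ = b * r - z * α := by linear_combination hr1
    have h2 : τ = -(a * r) - z * β := by linear_combination hr2
    rw [h1, h2]
    ext x; simp; ring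
  · change scaleOn ({i, j} : Set ι) z (e2 (e3 (fun x => u (some x)) + u none • κ)) +
      (-z • u none) • e2 κ = 0
    rw [map_add, H.c2, zero_add, map_smul, hκ, map_smul, map_sub, map_smul, map_smul, Di, Dj]
    ext x; simp; ring

section Step

variable [IsNoetherianRing R] [IsLocalRing R]

open IsLocalRing

/-- A resolution of an ideal `I` that is ready for the biliaison `I ↦ z I + (gᵢ, gⱼ)`, where `gₓ`
denotes the generator indexed by `x`: the pair `gᵢ, gⱼ` is regular with regular element `z`, its
Koszul relation is not a minimal syzygy, and neither is that of the pair `gⱼ, gₖ`, which comes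
next. The middle differential may have units in the two rows `i, j`, which the biliaison multiplies
by `z`. -/
structure Ready (e1 : (ι → R) →ₗ[R] R) (e2 : (J → R) →ₗ[R] (ι → R))
    (e3 : (K → R) →ₗ[R] (J → R)) (z : R) (i j k h : ι) : Prop where
  res : IsRes e1 e2 e3
  z_mem : z ∈ maximalIdeal R
  min1 : ∀ s, e1 s ∈ maximalIdeal R
  min2 : ∀ t x, x ≠ i → x ≠ j → e2 t x ∈ maximalIdeal R
  min3 : ∀ u x, e3 u x ∈ maximalIdeal R
  hij : i ≠ j
  hik : i ≠ k
  hih : i ≠ h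
  hjk : j ≠ k
  hjh : j ≠ h
  hkh : k ≠ h
  nij : Nul e1 e2 (Pi.single i 1) (Pi.single j 1)
  njk : Nul e1 e2 (Pi.single j 1) (Pi.single k 1)
  reg : Reg3 (e1 (Pi.single i 1)) (e1 (Pi.single j 1)) z
  pow : ∃ N s, e1 s = z ^ N

/-- One biliaison step raises the type by one and keeps the number of generators. The generator
indexed by `k` is moreover changed from `z gₖ` to `z gₖ + gᵢ ^ 2`, so that `gⱼ` and the new
generator form a regular pair, and the cyclically shifted pattern `j, k, h, i` is ready again. -/
theorem Ready.step {e1 : (ι → R) →ₗ[R] R} {e2 : (J → R) →ₗ[R] (ι → R)}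
    {e3 : (K → R) →ₗ[R] (J → R)} {z : R} {i j k h : ι} (H : Ready e1 e2 e3 z i j k h) :
    ∃ (f1 : (ι → R) →ₗ[R] R) (f2 : (Option J → R) →ₗ[R] (ι → R))
      (f3 : (Option K → R) →ₗ[R] (Option J → R)), Ready f1 f2 f3 z j k h i ∧
      ∀ t x, f2 t x ∈ maximalIdeal R := by
  obtain ⟨κ, hκm, hκ⟩ := H.nij
  have B := H.res.biliaison H.hij H.reg hκ
  set g1 := e1 ∘ₗ scaleOn ({i, j}ᶜ : Set ι) z with hg1
  set g2 := addCol (scaleOn ({i, j} : Set ι) z ∘ₗ e2) (e2 κ) with hg2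
  have Sin : ∀ x, (x = i ∨ x = j) → g1 (Pi.single x 1) = e1 (Pi.single x 1) := by
    intro x hx
    have : scaleOn ({i, j}ᶜ : Set ι) z (Pi.single x 1) = Pi.single x 1 := by
      ext y
      by_cases hy : y = x
      · simp [scaleOn, hy]; tauto
      · simp [scaleOn, hy]
    rw [hg1, LinearMap.comp_apply, this]
  have Sout : ∀ x, x ≠ i → x ≠ j → g1 (Pi.single x 1) = z * e1 (Pi.single x 1) := by
    intro x hi hj
    have : scaleOn ({i, j}ᶜ : Set ι) z (Pi.single x 1) = z • Pi.single x 1 := by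
      ext y
      by_cases hy : y = x
      · simp [scaleOn, hy, hi, hj]
      · simp [scaleOn, hy]
    rw [hg1, LinearMap.comp_apply, this, map_smul, smul_eq_mul]
  -- the Koszul relation of the pair `j, k` still lifts to the maximal ideal
  have Njk : Nul g1 g2 (Pi.single j 1) (Pi.single k 1) := by
    obtain ⟨τ, hτm, hτ⟩ := H.njk
    refine ⟨fun o => o.elim 0 τ, ?_, ?_⟩
    · rintro (_ | x)
      · exact zero_mem _
      · exact hτm x
    · rw [Sin j (Or.inr rfl), Sout k H.hik.symm H.hjk.symm]
      change scaleOn ({i, j} : Set ι) z (e2 τ) + (0 : R) • e2 κ = _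
      rw [hτ]
      ext y
      by_cases hi : y = i
      · simp [scaleOn, hi, H.hij, H.hik]
      by_cases hj : y = j
      · simp [scaleOn, hj, H.hjk]
      · simp [scaleOn, hi, hj]
  -- the generators `k, h` have both been multiplied by `z`, so `z` divides their Koszul relation
  have Nkh : Nul g1 g2 (Pi.single k 1) (Pi.single h 1) := by
    obtain ⟨τ, hτ⟩ := H.res.koszul (Pi.single k 1) (Pi.single h 1)
    refine ⟨fun o => o.elim 0 (z • τ), ?_, ?_⟩
    · rintro (_ | x)
      · exact zero_mem _
      · exact Ideal.mul_mem_right _ _ H.z_mem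
    · rw [Sout h H.hih.symm H.hjh.symm, Sout k H.hik.symm H.hjk.symm]
      change scaleOn ({i, j} : Set ι) z (e2 (z • τ)) + (0 : R) • e2 κ = _
      rw [map_smul, hτ]
      ext y
      by_cases hi : y = i
      · simp [scaleOn, hi, H.hih, H.hik]
      by_cases hj : y = j
      · simp [scaleOn, hj, H.hjk, H.hjh]
      · simp [scaleOn, hi, hj]; ring
  set r := e1 (Pi.single i 1) with hr
  have hrm : r ∈ maximalIdeal R := H.min1 _
  have Ek : shear i k H.hik r (Pi.single k 1) = Pi.single k 1 + r • Pi.single i 1 := by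
    ext y; simp [shear]
  have Eo : ∀ x, x ≠ k → shear i k H.hik r (Pi.single x 1) = Pi.single x 1 := by
    intro x hx
    ext y; simp [shear, hx.symm]
  have min2 : ∀ t x, g2 t x ∈ maximalIdeal R := by
    intro t x
    change scaleOn ({i, j} : Set ι) z (e2 fun y => t (some y)) x + t none * e2 κ x ∈ _
    refine add_mem ?_ (Ideal.mul_mem_left _ _ ?_)
    · by_cases hx : x = i ∨ x = j
      · simp only [scaleOn, LinearMap.coe_mk, AddHom.coe_mk, Set.mem_insert_iff,
          Set.mem_singleton_iff, hx, if_true]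
        exact Ideal.mul_mem_right _ _ H.z_mem
      · simp only [scaleOn, LinearMap.coe_mk, AddHom.coe_mk, Set.mem_insert_iff,
          Set.mem_singleton_iff, hx, if_false]
        push Not at hx
        exact H.min2 _ _ hx.1 hx.2
    · rw [hκ]
      exact sub_mem (Ideal.mul_mem_right _ _ (H.min1 _)) (Ideal.mul_mem_right _ _ (H.min1 _))
  have min2' : ∀ t x, ((shear i k H.hik r).symm.toLinearMap ∘ₗ g2) t x ∈ maximalIdeal R := by
    intro t x
    change g2 t x - (r * g2 t k) * (Pi.single i 1 : ι → R) x ∈ _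
    exact sub_mem (min2 t x) (Ideal.mul_mem_right _ _ (Ideal.mul_mem_right _ _ hrm))
  have vj : (g1 ∘ₗ (shear i k H.hik r).toLinearMap) (Pi.single j 1) = e1 (Pi.single j 1) := by
    simp [Eo j H.hjk, Sin j]
  have vk : (g1 ∘ₗ (shear i k H.hik r).toLinearMap) (Pi.single k 1) =
      r * r + (e1 (Pi.single j 1) * 0 + z * e1 (Pi.single k 1)) := by
    simp [Ek, Sin i, Sout k H.hik.symm H.hjk.symm, ← hr]; ring
  refine ⟨g1 ∘ₗ (shear i k H.hik r).toLinearMap, (shear i k H.hik r).symm.toLinearMap ∘ₗ g2, _,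
    ⟨B.conj _, H.z_mem, fun s => H.min1 _, fun t x _ _ => min2' t x, ?_, H.hjk, H.hjh, H.hij.symm,
    H.hkh, H.hik.symm, H.hih.symm, ?_, ?_, ?_, ?_⟩, min2'⟩
  · rintro u (_ | x)
    · exact Ideal.mul_mem_right _ _ (neg_mem H.z_mem)
    · exact add_mem (H.min3 _ _) (Ideal.mul_mem_left _ _ (hκm x))
  · apply Nul.conj
    rw [Ek, Eo j H.hjk]
    exact Njk.add_smul B hrm _
  · apply Nul.conj
    rw [Ek, Eo h H.hkh.symm]
    exact (Nkh.symm.add_smul B hrm _).symm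
  · rw [vj, vk]
    have h1 : Reg3 (e1 (Pi.single j 1)) z r := (H.reg.swap12 (H.min1 _)).swap23 hrm
    exact ((h1.mul_third h1).add_third 0 _).swap23 H.z_mem
  · obtain ⟨N, s, hs⟩ := H.pow
    refine ⟨N + 1, (shear i k H.hik r).symm (scaleOn ({i, j} : Set ι) z s), ?_⟩
    have DD : scaleOn ({i, j}ᶜ : Set ι) z (scaleOn ({i, j} : Set ι) z s) = z • s := by
      ext x
      by_cases hx : x = i <;> by_cases hx' : x = j <;> simp [scaleOn, hx, hx']
    simp [hg1, DD, hs, pow_succ']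

end Step

end Complexes

/-! ### Self-dual resolutions -/

section Constructions

variable {R : Type*} [CommRing R] {ι J K : Type}

/-- Adjoining the redundant generator `e1 f`: a trivial summand `R → R` is added to the complex. -/
theorem IsRes.redundant {e1 : (ι → R) →ₗ[R] R} {e2 : (J → R) →ₗ[R] (ι → R)}
    {e3 : (K → R) →ₗ[R] (J → R)} (H : IsRes e1 e2 e3) (f : ι → R) :
    IsRes (addCol e1 (e1 f)) (addRow (addCol e2 (-f)) (LinearMap.proj none)) (addRow e3 0) := by
  refine ⟨fun u hu => ?_, fun t ht => ?_, fun s hs => ?_, fun u => ?_, fun t => ?_⟩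
  · exact H.inj u (funext fun x => congrFun hu (some x))
  · have h1 : t none = 0 := congrFun ht none
    have h2 : e2 (fun x => t (some x)) + t none • (-f) = 0 := funext fun x => congrFun ht (some x)
    rw [h1, zero_smul, add_zero] at h2
    obtain ⟨u, hu⟩ := H.ex2 _ h2
    refine ⟨u, ?_⟩
    ext (_ | x)
    · exact h1
    · exact congrFun hu x
  · have hs' : e1 (fun x => s (some x)) + s none • e1 f = 0 := hs
    obtain ⟨t, ht⟩ := H.ex1 ((fun x => s (some x)) + s none • f) (by rw [map_add, map_smul, hs'])
    refine ⟨fun o => o.elim (s none) t, ?_⟩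
    ext (_ | x)
    · rfl
    · have := congrFun ht x
      simp only [Pi.add_apply, Pi.smul_apply, smul_eq_mul] at this
      simp [addCol, ← this]
  · ext (_ | x)
    · rfl
    · simp [addCol, H.c2]
  · change e1 (e2 (fun x => t (some x)) + t none • (-f)) + t none • e1 f = 0
    rw [map_add, H.c1]; simp

/-- The vector `(t, u, v)` of `R^ι × R × R`. -/
def ext2 (t : ι → R) (u v : R) : Option (Option ι) → R := fun o => o.elim v fun o' => o'.elim u t

theorem exists_ext2 {R : Type*} {ι : Type} (w : Option (Option ι) → R) : ∃ t u v, w = ext2 t u v :=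
  ⟨fun x => w (some (some x)), w (some none), w none, by ext (_ | _ | x) <;> rfl⟩

theorem ext2_inj {R : Type*} {ι : Type} {t t' : ι → R} {u v u' v' : R} (h : ext2 t u v = ext2 t' u' v') :
    t = t' ∧ u = u' ∧ v = v' :=
  ⟨funext fun x => congrFun h (some (some x)), congrFun h (some none), congrFun h none⟩

section

variable [DecidableEq ι]

/-- The alternating map with block matrix `[[A, β, γ], [-βᵀ, 0, s], [-γᵀ, -s, 0]]` where
`β = a eᵢ` and `γ = b eⱼ`. -/
def bigA (A : (ι → R) →ₗ[R] (ι → R)) (i j : ι) (a b s : R) :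
    (Option (Option ι) → R) →ₗ[R] (Option (Option ι) → R) :=
  addRow (addRow (addCol (addCol A (a • Pi.single i 1)) (b • Pi.single j 1))
    (s • LinearMap.proj none - a • LinearMap.proj (some (some i))))
    (-s • LinearMap.proj (some none) - b • LinearMap.proj (some (some j)))

theorem bigA_ext2 (A : (ι → R) →ₗ[R] (ι → R)) (i j : ι) (a b s : R) (t : ι → R) (u v : R) :
    bigA A i j a b s (ext2 t u v) =
      ext2 (A t + u • a • Pi.single i 1 + v • b • Pi.single j 1) (s * v - a * t i)
        (-s * u - b * t j) := by
  ext (_ | _ | x) <;> rfl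

end

section

variable [Fintype ι]

theorem ext2_dot (t t' : ι → R) (u v u' v' : R) :
    ext2 t u v ⬝ᵥ ext2 t' u' v' = t ⬝ᵥ t' + u * u' + v * v' := by
  simp [dotProduct, ext2, Fintype.sum_option]; ring

/-- The functional `s ↦ p ⬝ᵥ s`. -/
def dotL (p : ι → R) : (ι → R) →ₗ[R] R where
  toFun s := p ⬝ᵥ s
  map_add' s t := by simp [dotProduct_add]
  map_smul' r t := by simp [dotProduct_smul]

theorem dotL_single [DecidableEq ι] (p : ι → R) (x : ι) : dotL p (Pi.single x 1) = p x := by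
  simp [dotL]

end

end Constructions

section Gorenstein

variable {R : Type*} [CommRing R] [IsLocalRing R] {ι : Type} [Fintype ι]

open IsLocalRing

/-- A self-dual minimal resolution `0 → R → R^ι → R^ι → R` with alternating middle map `A` and
outer maps given by the vector `p`, together with three of the entries of `p` that form a regular
sequence. -/
structure Gor (p : ι → R) (A : (ι → R) →ₗ[R] (ι → R)) (i j k : ι) : Prop where
  alt : ∀ t, A t ⬝ᵥ t = 0
  ker : ∀ t, A t = 0 → ∃ r : R, t = r • p
  Ap : A p = 0
  ex : ∀ s, p ⬝ᵥ s = 0 → ∃ t, s = A t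
  minp : ∀ x, p x ∈ maximalIdeal R
  minA : ∀ t x, A t x ∈ maximalIdeal R
  hij : i ≠ j
  hik : i ≠ k
  hjk : j ≠ k
  reg : Reg3 (p i) (p j) (p k)

variable {p : ι → R} {A : (ι → R) →ₗ[R] (ι → R)} {i j k : ι}

theorem Gor.skew (H : Gor p A i j k) (s t : ι → R) : A s ⬝ᵥ t = -(s ⬝ᵥ A t) := by
  have h := H.alt (s + t)
  rw [map_add, add_dotProduct, dotProduct_add, dotProduct_add, H.alt, H.alt,
    dotProduct_comm (A t) s] at h
  linear_combination h

theorem Gor.dot_A (H : Gor p A i j k) (t : ι → R) : p ⬝ᵥ A t = 0 := by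
  have := H.skew p t
  rw [H.Ap, zero_dotProduct] at this
  linear_combination this

theorem Gor.res (H : Gor p A i j k) :
    IsRes (dotL p) A ((LinearMap.proj () : (Unit → R) →ₗ[R] R).smulRight p) := by
  refine ⟨fun u hu => ?_, fun t ht => ?_, H.ex, fun u => ?_, H.dot_A⟩
  · have := congrFun hu i
    ext ⟨⟩
    exact H.reg.one (u ()) (by simpa [mul_comm] using this)
  · obtain ⟨r, hr⟩ := H.ker t ht
    exact ⟨fun _ => r, by simp [hr]⟩
  · simp [H.Ap]

/-- The Koszul complex of a regular sequence of length three. -/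
theorem Reg3.gor {x y z : R} (h : Reg3 x y z) (hx : x ∈ maximalIdeal R) (hy : y ∈ maximalIdeal R)
    (hz : z ∈ maximalIdeal R) : Gor ![x, y, z] (crossProduct ![x, y, z]) 0 1 2 := by
  have hp : ∀ i, (![x, y, z] : Fin 3 → R) i ∈ maximalIdeal R := by
    intro i; fin_cases i <;> assumption
  refine ⟨fun t => ?_, fun t ht => ?_, cross_self _, fun s hs => ?_, hp, fun t i => ?_,
    by decide, by decide, by decide, h⟩
  · rw [dotProduct_comm, dot_cross_self]
  · rw [cross_apply] at ht
    have h0 := congrFun ht 0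
    have h1 := congrFun ht 1
    have h2 := congrFun ht 2
    simp at h0 h1 h2
    obtain ⟨r, hr⟩ := h.two (t 0) (t 1) (by linear_combination -h2)
    have e1 := h.one (t 1 - y * r) (by linear_combination h2 + y * hr)
    have e2 := h.one (t 2 - z * r) (by linear_combination -h1 + z * hr)
    refine ⟨r, ?_⟩
    ext i
    fin_cases i
    · simp [hr, mul_comm]
    · simp; linear_combination e1
    · simp; linear_combination e2
  · simp [dotProduct, Fin.sum_univ_three] at hs
    obtain ⟨α, β, hαβ⟩ := h.three (s 2) (-s 0) (-s 1) (by linear_combination hs)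
    obtain ⟨r, h1, h2⟩ := h.koszul (s := s 0 + z * α) (u := s 1 + z * β)
      (by linear_combination hs - z * hαβ)
    refine ⟨![-β, α, r], ?_⟩
    rw [cross_apply]
    ext i
    fin_cases i
    · simp; linear_combination h1
    · simp; linear_combination h2
    · simp; linear_combination hαβ
  · rw [cross_apply]
    fin_cases i <;>
      exact sub_mem (Ideal.mul_mem_right _ _ (by assumption))
        (Ideal.mul_mem_right _ _ (by assumption))

variable [DecidableEq ι] [IsNoetherianRing R]

/-- A redundant generator `p j ^ 2` makes a pattern of four generators ready for biliaison, since
its Koszul relations are never minimal. -/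
theorem Gor.ready_redundant (H : Gor p A i j k) :
    ∃ (e1 : (Option ι → R) →ₗ[R] R) (e2 : (Option ι → R) →ₗ[R] (Option ι → R))
      (e3 : (Unit → R) →ₗ[R] (Option ι → R)) (z : R),
      Ready e1 e2 e3 z (some i) none (some k) (some j) := by
  set f : ι → R := p j • Pi.single j 1 with hf
  have hs : ∀ x : ι, addCol (dotL p) (dotL p f) (Pi.single (some x) 1) = p x := by
    intro x
    have : (fun y => (Pi.single (some x) 1 : Option ι → R) (some y)) = Pi.single x 1 := by
      ext y; simp [Pi.single_apply]
    simp only [addCol, LinearMap.coe_mk, AddHom.coe_mk, this, dotL_single]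
    simp
  have hn : addCol (dotL p) (dotL p f) (Pi.single none 1) = p j * p j := by
    have : (fun y => (Pi.single none 1 : Option ι → R) (some y)) = 0 := by
      ext y; simp
    simp only [addCol, LinearMap.coe_mk, AddHom.coe_mk, this, map_zero]
    simp [hf, dotL_single]
  have N : ∀ x : ι, Nul (addCol (dotL p) (dotL p f))
      (addRow (addCol A (-f)) (LinearMap.proj none))
      (Pi.single (some x) 1) (Pi.single none 1) := by
    intro x
    obtain ⟨τ, hτ⟩ := H.res.koszul (Pi.single x 1) (Pi.single j 1)
    rw [dotL_single, dotL_single] at hτ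
    refine ⟨fun o => o.elim (-p x) (p j • τ), ?_, ?_⟩
    · rintro (_ | y)
      · exact neg_mem (H.minp x)
      · exact Ideal.mul_mem_right _ _ (H.minp j)
    · rw [hs, hn]
      ext (_ | y)
      · simp
      · change A (p j • τ) y + (-p x) * (-f) y = _
        rw [map_smul, hτ]
        simp [hf, Pi.single_apply]
        split_ifs <;> ring
  refine ⟨_, _, _, p k, H.res.redundant f, H.minp k, fun s => ?_, ?_, ?_, by simp, by simp [H.hik],
    by simp [H.hij], by simp, by simp, by simp [H.hjk.symm], N i, (N k).symm, ?_,
    1, Pi.single (some k) 1, by rw [hs, pow_one]⟩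
  · have hp : ∀ s, dotL p s ∈ maximalIdeal R := fun s =>
      Ideal.sum_mem _ fun x _ => Ideal.mul_mem_right _ _ (H.minp x)
    exact add_mem (hp _) (Ideal.mul_mem_left _ _ (hp _))
  · rintro t (_ | x) h1 h2
    · exact absurd rfl h2
    · exact add_mem (H.minA _ _) (Ideal.mul_mem_left _ _
        (neg_mem (Ideal.mul_mem_right _ _ (H.minp j))))
  · rintro u (_ | x)
    · exact zero_mem _
    · exact Ideal.mul_mem_left _ _ (H.minp _)
  · rw [hs, hn]
    have h1 := H.reg.swap23 (H.minp j)
    exact (h1.mul_third h1).swap23 (H.minp k)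

/-- Enlarging the resolution by two generators. Modulo the complete intersection `(b, c)` with
`b = p i ^ 2`, `c = p j ^ 2`, the new ideal is the isomorphic image `(p k - ψ) I` of the old one,
where `ψ : I → R ⧸ (b, c)` sends `p x` to `q x` for a vector `q` with `A q = b γ - c β`. -/
theorem Gor.step (H : Gor p A i j k) :
    ∃ (P : Option (Option ι) → R) (B : (Option (Option ι) → R) →ₗ[R] (Option (Option ι) → R)),
      Gor P B (some (some k)) (some none) none ∧
      ∀ m : ι, Nul (dotL P) B (Pi.single (some (some m)) 1) (Pi.single (some none) 1) := by
  obtain ⟨κ, hκi, hκj, hκ⟩ : ∃ κ : ι → R, κ i = 0 ∧ κ j = 0 ∧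
      A κ = p i • Pi.single j 1 - p j • Pi.single i 1 := by
    obtain ⟨κ, hκ⟩ := H.ex (p i • Pi.single j 1 - p j • Pi.single i 1) (by
      simp [dotProduct_sub]; ring)
    have h := H.alt κ
    rw [← hκ] at h
    simp [sub_dotProduct] at h
    obtain ⟨r, hr⟩ := H.reg.two (κ i) (κ j) (by linear_combination -h)
    have hr' := H.reg.one (κ j - p j * r) (by linear_combination h + p j * hr)
    refine ⟨κ - r • p, by simp [hr]; ring, ?_, by rw [map_sub, map_smul, H.Ap, ← hκ]; simp⟩
    simp; linear_combination hr'
  set q : ι → R := (p i * p j) • κ with hq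
  have hAq : A q = (p i * p i * p j) • Pi.single j 1 - (p j * p j * p i) • Pi.single i 1 := by
    rw [hq, map_smul, hκ]; ext x; simp; ring
  have hqi : q i = 0 := by simp [hq, hκi]
  have hqj : q j = 0 := by simp [hq, hκj]
  have hqm : ∀ x, q x ∈ maximalIdeal R := fun x =>
    Ideal.mul_mem_right _ _ (Ideal.mul_mem_right _ _ (H.minp i))
  have reg1 : Reg3 (p i * p i) (p j * p j) (p k) := by
    have h1 := H.reg.swap23 (H.minp j)
    have h2 := (h1.mul_third h1).swap23 (H.minp k)
    have h3 := (h2.swap12 (H.minp i)).swap23 (H.minp i)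
    exact ((h3.mul_third h3).swap23 (H.minp k)).swap12 (Ideal.mul_mem_left _ _ (H.minp j))
  have reg2 : Reg3 (p i * p i) (p j * p j) (p k * p k + -q k) :=
    (reg1.mul_third reg1).add_nilpotent (s := p j * p j * (κ k * κ k)) (u := 0)
      (by simp [hq]; ring)
  set P := ext2 (q - p k • p) (p j * p j) (-(p i * p i)) with hP
  set B := bigA A i j (p i) (p j) (p k) with hB
  have Bext := bigA_ext2 A i j (p i) (p j) (p k)
  have minP : ∀ x, P x ∈ maximalIdeal R := by
    rintro (_ | _ | x)
    · exact neg_mem (Ideal.mul_mem_left _ _ (H.minp i))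
    · exact Ideal.mul_mem_left _ _ (H.minp j)
    · exact sub_mem (hqm x) (Ideal.mul_mem_left _ _ (H.minp x))
  have last : ∀ e f : R, P ⬝ᵥ ext2 0 e f = 0 → ∃ r : R, ext2 0 e f = B (ext2 (r • p) 0 0) := by
    intro e f h
    rw [hP, ext2_dot, dotProduct_zero] at h
    obtain ⟨r, h1, h2⟩ := reg1.koszul (s := -f) (u := e) (by linear_combination h)
    refine ⟨r, ?_⟩
    rw [hB, Bext, map_smul, H.Ap, h2, show f = -(p j * p j * r) by linear_combination -h1]
    congr 1
    · simp
    · simp; ring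
    · simp; ring
  have alt : ∀ t, B t ⬝ᵥ t = 0 := by
    intro w
    obtain ⟨t, u, v, rfl⟩ := exists_ext2 w
    rw [hB, Bext, ext2_dot, add_dotProduct, add_dotProduct, H.alt]
    simp
    ring
  have BP : B P = 0 := by
    rw [hP, hB, Bext, map_sub, hAq, map_smul, H.Ap]
    ext (_ | _ | x)
    · simp [ext2, hqj]; ring
    · simp [ext2, hqi]; ring
    · simp [ext2]; ring
  have dotB : ∀ w, P ⬝ᵥ B w = 0 := by
    intro w
    have h := alt (P + w)
    rw [map_add, add_dotProduct, dotProduct_add, dotProduct_add, alt, alt, BP, zero_dotProduct,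
      dotProduct_comm (B w) P] at h
    linear_combination h
  refine ⟨P, B, ⟨alt, ?_, BP, ?_, minP, ?_, by simp, by simp, by simp, ?_⟩, ?_⟩
  · intro w hw
    obtain ⟨t, u, v, rfl⟩ := exists_ext2 w
    rw [hB, Bext, show (0 : Option (Option ι) → R) = ext2 0 0 0 by ext (_ | _ | x) <;> rfl] at hw
    obtain ⟨h1, h2, h3⟩ := ext2_inj hw
    have h4 := congrArg (p ⬝ᵥ ·) h1
    simp [dotProduct_add, H.dot_A] at h4
    obtain ⟨r, hu, hv⟩ := reg1.koszul (s := u) (u := v) (by linear_combination h4)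
    obtain ⟨r', hr'⟩ := H.ker (t - r • q) (by
      rw [map_sub, map_smul, hAq, ← sub_eq_zero.2 h1, hu, hv]
      ext x; simp; ring)
    have ht : t = r • q + r' • p := by rw [← hr']; abel
    have hti : t i = r' * p i := by simp [ht, hqi]
    rw [hti, hv] at h2
    have h5 := reg1.one (r' + p k * r) (by linear_combination -h2)
    have h6 : r' = -(p k * r) := by linear_combination h5
    refine ⟨r, ?_⟩
    rw [hP, ht, h6, hu, hv]
    ext (_ | _ | x)
    · simp [ext2]; ring
    · simp [ext2]; ring
    · simp [ext2]; ring
  · intro w hw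
    obtain ⟨t, u, v, rfl⟩ := exists_ext2 w
    have hw' := hw
    rw [hP, ext2_dot, sub_dotProduct, smul_dotProduct (p k) p t, smul_eq_mul] at hw'
    set T := p ⬝ᵥ t with hT
    obtain ⟨y, hy⟩ := H.ex (p k • t - T • Pi.single k 1) (by
      simp [dotProduct_sub, ← hT]; ring)
    have h1 := H.skew q y
    rw [← hy, hAq] at h1
    simp [sub_dotProduct, dotProduct_sub] at h1
    -- `T` times the regular element `p k ^ 2 - q k` lies in `(b, c)`, hence so does `T`
    obtain ⟨α, δ, hαδ⟩ := reg2.three T (-(p k * v) - p j * y j) (p k * u + p i * y i)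
      (by linear_combination -p k * hw' + h1)
    obtain ⟨t', ht'⟩ := H.ex (t - α • p i • Pi.single i 1 - δ • p j • Pi.single j 1) (by
      simp [dotProduct_sub, ← hT]; linear_combination hαδ)
    have h2 : t = A t' + α • p i • Pi.single i 1 + δ • p j • Pi.single j 1 := by
      rw [← ht']; abel
    have h3 : ext2 t u v = B (ext2 t' α δ) +
        ext2 0 (u - (p k * δ - p i * t' i)) (v - (-p k * α - p j * t' j)) := by
      rw [hB, Bext, ← h2]
      ext (_ | _ | x) <;> simp [ext2]
    obtain ⟨r, hr⟩ := last (u - (p k * δ - p i * t' i)) (v - (-p k * α - p j * t' j)) (by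
      rw [h3, dotProduct_add, dotB, zero_add] at hw
      exact hw)
    exact ⟨ext2 t' α δ + ext2 (r • p) 0 0, by rw [h3, hr, map_add]⟩
  · intro w x
    obtain ⟨t, u, v, rfl⟩ := exists_ext2 w
    rw [hB, Bext]
    rcases x with _ | _ | x
    · exact sub_mem (Ideal.mul_mem_right _ _ (neg_mem (H.minp k)))
        (Ideal.mul_mem_right _ _ (H.minp j))
    · exact sub_mem (Ideal.mul_mem_right _ _ (H.minp k)) (Ideal.mul_mem_right _ _ (H.minp i))
    · exact add_mem (add_mem (H.minA _ _)
        (Ideal.mul_mem_left _ _ (Ideal.mul_mem_right _ _ (H.minp i))))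
        (Ideal.mul_mem_left _ _ (Ideal.mul_mem_right _ _ (H.minp j)))
  · have hbm : p i * p i ∈ maximalIdeal R := Ideal.mul_mem_left _ _ (H.minp i)
    have h := ((reg2.neg_third.swap12 hbm).swap23 hbm).neg_third.swap12
      (Ideal.mul_mem_left _ _ (H.minp j))
    have e : P (some (some k)) = -(p k * p k + -q k) := by simp [hP, ext2]; ring
    rw [e]
    exact h
  · intro m
    obtain ⟨τ, hτ⟩ := H.res.koszul (Pi.single m 1) (Pi.single j 1)
    rw [dotL_single, dotL_single] at hτ
    have hm : (Pi.single (some (some m)) 1 : Option (Option ι) → R) = ext2 (Pi.single m 1) 0 0 := by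
      ext (_ | _ | x) <;> simp [ext2, Pi.single_apply]
    have hn : (Pi.single (some none) 1 : Option (Option ι) → R) = ext2 0 1 0 := by
      ext (_ | _ | x) <;> simp [ext2]
    -- the lift of the Koszul relation, up to a multiple of `(p, 0, 0)`
    set w := ext2 (p j • τ) 0 (p m) with hw
    set D := dotL P (Pi.single (some none) 1) • (Pi.single (some (some m)) 1) -
      dotL P (Pi.single (some (some m)) 1) • (Pi.single (some none) 1) - B w with hD
    have hD0 : P ⬝ᵥ D = 0 := by
      rw [hD, dotProduct_sub, dotProduct_sub, dotB, dotL_single, dotL_single]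
      simp; ring
    have hDt : D = ext2 0 (D (some none)) (D none) := by
      ext (_ | _ | x)
      · rfl
      · rfl
      · rw [hD, hw, hB, Bext, map_smul, hτ, dotL_single, dotL_single, hm, hn]
        simp [ext2, hP]
        ring
    obtain ⟨r, hr⟩ := last _ _ (hDt ▸ hD0)
    refine ⟨w + ext2 (r • p) 0 0, ?_, ?_⟩
    · rintro (_ | _ | x)
      · exact add_mem (H.minp m) (zero_mem _)
      · exact add_mem (zero_mem _) (zero_mem _)
      · exact add_mem (Ideal.mul_mem_right _ _ (H.minp j)) (Ideal.mul_mem_left _ _ (H.minp x))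
    · rw [map_add, ← hr, ← hDt, hD]
      abel

theorem Gor.step_ready (H : Gor p A i j k) :
    ∃ (P : Option (Option ι) → R) (B : (Option (Option ι) → R) →ₗ[R] (Option (Option ι) → R)),
      Gor P B (some (some k)) (some none) none ∧
      Ready (dotL P) B ((LinearMap.proj () : (Unit → R) →ₗ[R] R).smulRight P) (P none)
        (some (some k)) (some none) (some (some i)) (some (some j)) := by
  obtain ⟨P, B, G, N⟩ := H.step
  refine ⟨P, B, G, G.res, G.minp _, fun s => ?_, fun t x _ _ => G.minA t x, fun u x => ?_,
    by simp, by simp [H.hik.symm], by simp [H.hjk.symm], by simp, by simp, by simp [H.hij],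
    N k, (N i).symm, ?_, 1, Pi.single none 1, by rw [dotL_single, pow_one]⟩
  · exact Ideal.sum_mem _ fun x _ => Ideal.mul_mem_right _ _ (G.minp x)
  · exact Ideal.mul_mem_left _ _ (G.minp x)
  · rw [dotL_single, dotL_single]; exact G.reg

end Gorenstein

/-! ### Existence of all formats -/

section Assembly

variable {R : Type*} [CommRing R] [IsLocalRing R]

open IsLocalRing

/-- Passing from a resolution with arbitrary finite index types to matrices. -/
theorem IsRes.matrices {ι J K : Type} [Fintype ι] [Fintype J] [Fintype K] {n l : ℕ}
    (hι : Fintype.card ι = l + 1) (hJ : Fintype.card J = n + l) (hK : Fintype.card K = n)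
    {e1 : (ι → R) →ₗ[R] R} {e2 : (J → R) →ₗ[R] (ι → R)} {e3 : (K → R) →ₗ[R] (J → R)}
    (H : IsRes e1 e2 e3) (min1 : ∀ s, e1 s ∈ maximalIdeal R)
    (min2 : ∀ t x, e2 t x ∈ maximalIdeal R) (min3 : ∀ u x, e3 u x ∈ maximalIdeal R)
    {s1 s2 s3 : ι → R} (reg : Reg3 (e1 s1) (e1 s2) (e1 s3)) :
    ∃ (I : Ideal R)
      (e3 : Matrix (Fin (n + l)) (Fin n) R) (e2 : Matrix (Fin (l + 1)) (Fin (n + l)) R)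
      (e1 : Matrix (Fin 1) (Fin (l + 1)) R),
      GradeGE I 3 ∧
      (∀ i j, e3 i j ∈ IsLocalRing.maximalIdeal R) ∧
      (∀ i j, e2 i j ∈ IsLocalRing.maximalIdeal R) ∧
      (∀ i j, e1 i j ∈ IsLocalRing.maximalIdeal R) ∧
      Function.Injective (Matrix.mulVecLin e3) ∧
      LinearMap.ker (Matrix.mulVecLin e2) = LinearMap.range (Matrix.mulVecLin e3) ∧
      LinearMap.ker (Matrix.mulVecLin e1) = LinearMap.range (Matrix.mulVecLin e2) ∧
      I = Ideal.span (Set.range fun j => e1 0 j) := by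
  let E := LinearEquiv.funCongrLeft R R (Fintype.equivFinOfCardEq hι).symm
  let F := LinearEquiv.funCongrLeft R R (Fintype.equivFinOfCardEq hJ).symm
  let G := LinearEquiv.funCongrLeft R R (Fintype.equivFinOfCardEq hK).symm
  let f1 : (Fin (l + 1) → R) →ₗ[R] (Fin 1 → R) := LinearMap.pi fun _ => e1 ∘ₗ E.symm.toLinearMap
  let f2 : (Fin (n + l) → R) →ₗ[R] (Fin (l + 1) → R) :=
    E.toLinearMap ∘ₗ e2 ∘ₗ F.symm.toLinearMap
  let f3 : (Fin n → R) →ₗ[R] (Fin (n + l) → R) := F.toLinearMap ∘ₗ e3 ∘ₗ G.symm.toLinearMap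
  have h1 : Matrix.mulVecLin (LinearMap.toMatrix' f1) = f1 := by
    rw [← Matrix.toLin'_apply', Matrix.toLin'_toMatrix']
  have h2 : Matrix.mulVecLin (LinearMap.toMatrix' f2) = f2 := by
    rw [← Matrix.toLin'_apply', Matrix.toLin'_toMatrix']
  have h3 : Matrix.mulVecLin (LinearMap.toMatrix' f3) = f3 := by
    rw [← Matrix.toLin'_apply', Matrix.toLin'_toMatrix']
  have mem : ∀ s, e1 s ∈ Ideal.span (Set.range fun j => LinearMap.toMatrix' f1 0 j) := by
    intro s
    have : e1 s = Matrix.mulVecLin (LinearMap.toMatrix' f1) (E s) 0 := by rw [h1]; simp [f1]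
    rw [this, Matrix.mulVecLin_apply, Matrix.mulVec, dotProduct]
    refine Ideal.sum_mem _ fun j _ => ?_
    refine Ideal.mul_mem_right _ _ ?_
    exact Ideal.subset_span ⟨j, rfl⟩
  refine ⟨_, LinearMap.toMatrix' f3, LinearMap.toMatrix' f2, LinearMap.toMatrix' f1,
    ⟨![e1 s1, e1 s2, e1 s3], ?_, reg.isRegSeq⟩, ?_, ?_, ?_, ?_, ?_, ?_, rfl⟩
  · intro i
    fin_cases i <;> exact mem _
  · intro i j
    rw [LinearMap.toMatrix'_apply]
    exact min3 _ _
  · intro i j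
    rw [LinearMap.toMatrix'_apply]
    exact min2 _ _
  · intro i j
    rw [LinearMap.toMatrix'_apply]
    exact min1 _
  · rw [h3, ← LinearMap.ker_eq_bot, LinearMap.ker_eq_bot']
    intro u hu
    simpa using H.inj (G.symm u) (by simpa [f3] using hu)
  · rw [h2, h3]
    ext t
    constructor
    · intro ht
      obtain ⟨u, hu⟩ := H.ex2 (F.symm t) (by simpa [f2] using ht)
      exact ⟨G u, by simp [f3, ← hu]⟩
    · rintro ⟨u, rfl⟩
      simp [f2, f3, H.c2]
  · rw [h1, h2]
    ext s
    constructor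
    · intro hs
      obtain ⟨t, ht⟩ := H.ex1 (E.symm s) (congrFun hs 0)
      exact ⟨F t, by simp [f2, ← ht]⟩
    · rintro ⟨t, rfl⟩
      ext
      simp [f1, f2, H.c1]

/-- There is a resolution of format `(1, l + 1, n + l, n)` that is ready for biliaison. -/
def ReadyOfFormat (R : Type*) [CommRing R] [IsLocalRing R] (l n : ℕ) : Prop :=
  ∃ (ι J K : Type) (_ : Fintype ι) (_ : Fintype J) (_ : Fintype K) (_ : DecidableEq ι)
    (e1 : (ι → R) →ₗ[R] R) (e2 : (J → R) →ₗ[R] (ι → R)) (e3 : (K → R) →ₗ[R] (J → R))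
    (z : R) (i j k h : ι), Fintype.card ι = l + 1 ∧ Fintype.card J = n + l ∧ Fintype.card K = n ∧
    Ready e1 e2 e3 z i j k h

/-- There is a self-dual resolution of format `(1, l + 1, l + 1, 1)`. -/
def GorOfFormat (R : Type*) [CommRing R] [IsLocalRing R] (l : ℕ) : Prop :=
  ∃ (ι : Type) (_ : Fintype ι) (_ : DecidableEq ι) (p : ι → R) (A : (ι → R) →ₗ[R] (ι → R))
    (i j k : ι), Fintype.card ι = l + 1 ∧ Gor p A i j k

variable [IsNoetherianRing R]

theorem ReadyOfFormat.succ {l n : ℕ} (H : ReadyOfFormat R l n) : ReadyOfFormat R l (n + 1) := by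
  obtain ⟨ι, J, K, _, _, _, _, e1, e2, e3, z, i, j, k, h, h1, h2, h3, H⟩ := H
  obtain ⟨f1, f2, f3, H', -⟩ := H.step
  exact ⟨ι, Option J, Option K, inferInstance, inferInstance, inferInstance, inferInstance,
    f1, f2, f3, z, j, k, h, i, h1, by simp [h2]; omega, by simp [h3], H'⟩

theorem GorOfFormat.ready_odd {l : ℕ} (H : GorOfFormat R l) : ReadyOfFormat R (l + 1) 1 := by
  obtain ⟨ι, _, _, p, A, i, j, k, h, H⟩ := H
  obtain ⟨e1, e2, e3, z, H'⟩ := H.ready_redundant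
  exact ⟨Option ι, Option ι, Unit, inferInstance, inferInstance, inferInstance, inferInstance,
    e1, e2, e3, z, _, _, _, _, by simp [h], by simp [h]; omega, by simp, H'⟩

theorem GorOfFormat.step {l : ℕ} (H : GorOfFormat R l) :
    GorOfFormat R (l + 2) ∧ ReadyOfFormat R (l + 2) 1 := by
  obtain ⟨ι, _, _, p, A, i, j, k, h, H⟩ := H
  obtain ⟨P, B, H1, H2⟩ := H.step_ready
  exact ⟨⟨Option (Option ι), inferInstance, inferInstance, P, B, _, _, _, by simp [h], H1⟩,
    ⟨Option (Option ι), Option (Option ι), Unit, inferInstance, inferInstance, inferInstance,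
    inferInstance, _, _, _, _, _, _, _, _, by simp [h], by simp [h]; omega, by simp, H2⟩⟩

theorem gorOfFormat (hdepth : GradeGE (maximalIdeal R) 3) (m : ℕ) :
    GorOfFormat R (2 * m + 2) := by
  induction m with
  | zero =>
    obtain ⟨x, hx, hreg⟩ := hdepth
    exact ⟨Fin 3, inferInstance, inferInstance, _, _, 0, 1, 2, by simp,
      hreg.reg3.gor (hx 0) (hx 1) (hx 2)⟩
  | succ m ih => exact ih.step.1

theorem readyOfFormat (hdepth : GradeGE (maximalIdeal R) 3) {l : ℕ} (hl : 3 ≤ l) (n : ℕ) :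
    ReadyOfFormat R l (n + 1) := by
  induction n with
  | zero =>
    rcases Nat.even_or_odd' l with ⟨m, rfl | rfl⟩
    · obtain ⟨m, rfl⟩ : ∃ m', m = m' + 2 := ⟨m - 2, by omega⟩
      exact (gorOfFormat hdepth m).step.2
    · obtain ⟨m, rfl⟩ : ∃ m', m = m' + 1 := ⟨m - 1, by omega⟩
      exact (gorOfFormat hdepth m).ready_odd
  | succ n ih => exact ih.succ

end Assembly

theorem exists_minimal_resolution_of_format
    {R : Type*} [CommRing R] [IsNoetherianRing R] [IsLocalRing R]
    (hdepth : GradeGE (IsLocalRing.maximalIdeal R) 3)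
    (n l : ℕ) (hn : 0 < n) (hl : 0 < l)
    (hcase : (3 ≤ l ∧ 2 ≤ n) ∨ (n = 1 ∧ 0 < l ∧ Even l)) :
    ∃ (I : Ideal R)
      (e3 : Matrix (Fin (n + l)) (Fin n) R) (e2 : Matrix (Fin (l + 1)) (Fin (n + l)) R)
      (e1 : Matrix (Fin 1) (Fin (l + 1)) R),
      -- `I` has grade 3
      GradeGE I 3 ∧
      -- the resolution is minimal …
      (∀ i j, e3 i j ∈ IsLocalRing.maximalIdeal R) ∧
      (∀ i j, e2 i j ∈ IsLocalRing.maximalIdeal R) ∧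
      (∀ i j, e1 i j ∈ IsLocalRing.maximalIdeal R) ∧
      -- … acyclic …
      Function.Injective (Matrix.mulVecLin e3) ∧
      LinearMap.ker (Matrix.mulVecLin e2) = LinearMap.range (Matrix.mulVecLin e3) ∧
      LinearMap.ker (Matrix.mulVecLin e1) = LinearMap.range (Matrix.mulVecLin e2) ∧
      -- … and resolves `R/I`
      I = Ideal.span (Set.range fun j => e1 0 j) := by
  rcases hcase with ⟨hl3, hn2⟩ | ⟨rfl, -, hev⟩
  · obtain ⟨n, rfl⟩ : ∃ n', n = n' + 2 := ⟨n - 2, by omega⟩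
    obtain ⟨ι, J, K, _, _, _, _, e1, e2, e3, z, i, j, k, h, h1, h2, h3, H⟩ :=
      readyOfFormat hdepth hl3 n
    -- one more biliaison, after which all rows of the middle map are minimal
    obtain ⟨f1, f2, f3, H', min2⟩ := H.step
    obtain ⟨N, s, hs⟩ := H'.pow
    exact H'.res.matrices h1 (by simp [h2]; omega) (by simp [h3]) H'.min1 min2 H'.min3
      (s3 := s) (hs ▸ H'.reg.pow_third N)
  · obtain ⟨m, rfl⟩ : ∃ m, l = 2 * m + 2 := by
      obtain ⟨m, rfl⟩ := hev
      exact ⟨m - 1, by omega⟩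
    obtain ⟨ι, _, _, p, A, i, j, k, h, H⟩ := gorOfFormat hdepth m
    refine H.res.matrices (n := 1) (l := 2 * m + 2) h (by rw [h]; omega) (by simp)
      (fun s => Ideal.sum_mem _ fun x _ => Ideal.mul_mem_right _ _ (H.minp x)) H.minA
      (fun u x => Ideal.mul_mem_left _ _ (H.minp x))
      (s1 := Pi.single i 1) (s2 := Pi.single j 1) (s3 := Pi.single k 1) ?_
    simp only [dotL_single]
    exact H.reg
end

section
/- Let (R, m) be a Noetherian local ring with depth(m) ≥ 3, and let (f_0, f_1, f_2, f_3) be a valid format with Euler characteristic f_0 - f_1 + f_2 - f_3 = 0 and r_2 = f_2 - f_3 > 1. Then there exists a minimal acyclic free complex 0 → R^{f_3} → R^{f_2} → R^{f_1} → R^{f_0} over R. -/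
namespace MinimalComplex

open Matrix

/-! ### Acyclic complexes over arbitrary finite index types -/

/-- `0 → R^δ → R^γ → R^β → R^α` is acyclic (no condition on the cokernel of `d1`) and all entries
of the differentials lie in the ideal `I`. Arbitrary finite index types are allowed so that
block matrices can be used; exactness is stated on elements. -/
structure IsMinAcyclic {R : Type*} [CommRing R] (I : Ideal R) {α β γ δ : Type*}
    [Fintype β] [Fintype γ] [Fintype δ]
    (d3 : Matrix γ δ R) (d2 : Matrix β γ R) (d1 : Matrix α β R) : Prop where
  mem3 : ∀ i j, d3 i j ∈ I
  mem2 : ∀ i j, d2 i j ∈ I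
  mem1 : ∀ i j, d1 i j ∈ I
  inj : ∀ w, d3 *ᵥ w = 0 → w = 0
  exact2 : ∀ u, d2 *ᵥ u = 0 ↔ ∃ w, d3 *ᵥ w = u
  exact1 : ∀ v, d1 *ᵥ v = 0 ↔ ∃ u, d2 *ᵥ u = v

variable {R : Type*} [CommRing R] {I : Ideal R}

lemma submatrix_mulVec_comp {m n m' n' : Type*} [Fintype n] [Fintype n']
    (A : Matrix m n R) (f : m' → m) (e : n' ≃ n) (w : n' → R) :
    (A.submatrix f e) *ᵥ w = (A *ᵥ (w ∘ e.symm)) ∘ f := by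
  rw [Matrix.submatrix_mulVec_equiv]

lemma comp_equiv_eq_zero {m m' : Type*} (e : m' ≃ m) (u : m → R) : u ∘ e = 0 ↔ u = 0 := by
  constructor
  · intro h
    funext i
    simpa using congrFun h (e.symm i)
  · rintro rfl
    rfl

lemma IsMinAcyclic.reindex {α β γ δ α' β' γ' δ' : Type*}
    [Fintype β] [Fintype γ] [Fintype δ] [Fintype β'] [Fintype γ'] [Fintype δ']
    {d3 : Matrix γ δ R} {d2 : Matrix β γ R} {d1 : Matrix α β R}
    (h : IsMinAcyclic I d3 d2 d1) (ea : α' ≃ α) (eb : β' ≃ β) (ec : γ' ≃ γ) (ed : δ' ≃ δ) :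
    IsMinAcyclic I (d3.submatrix ec ed) (d2.submatrix eb ec) (d1.submatrix ea eb) where
  mem3 _ _ := h.mem3 _ _
  mem2 _ _ := h.mem2 _ _
  mem1 _ _ := h.mem1 _ _
  inj w hw := by
    rw [submatrix_mulVec_comp, comp_equiv_eq_zero] at hw
    exact (comp_equiv_eq_zero ed.symm w).1 (h.inj _ hw)
  exact2 u := by
    rw [submatrix_mulVec_comp, comp_equiv_eq_zero, h.exact2]
    constructor
    · rintro ⟨w, hw⟩
      refine ⟨w ∘ ed, ?_⟩
      rw [submatrix_mulVec_comp]
      funext i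
      simp [Function.comp_def, hw]
    · rintro ⟨w, rfl⟩
      refine ⟨w ∘ ed.symm, ?_⟩
      rw [submatrix_mulVec_comp]
      funext i
      simp
  exact1 u := by
    rw [submatrix_mulVec_comp, comp_equiv_eq_zero, h.exact1]
    constructor
    · rintro ⟨w, hw⟩
      refine ⟨w ∘ ec, ?_⟩
      rw [submatrix_mulVec_comp]
      funext i
      simp [Function.comp_def, hw]
    · rintro ⟨w, rfl⟩
      refine ⟨w ∘ ec.symm, ?_⟩
      rw [submatrix_mulVec_comp]
      funext i
      simp

/-! ### Enlarging a complex -/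

/-- Direct sum with `0 → 0 → R^ε → R^ε`, the last map being multiplication by `z`. -/
lemma IsMinAcyclic.add_r1 {α β γ δ ε : Type*}
    [Fintype β] [Fintype γ] [Fintype δ] [Fintype ε] [DecidableEq ε]
    {d3 : Matrix γ δ R} {d2 : Matrix β γ R} {d1 : Matrix α β R}
    (h : IsMinAcyclic I d3 d2 d1) {z : R} (hzI : z ∈ I) (hz : ∀ a, z * a = 0 → a = 0) :
    IsMinAcyclic I d3 (fromRows d2 (0 : Matrix ε γ R))
      (fromBlocks d1 0 0 (z • (1 : Matrix ε ε R))) where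
  mem3 := h.mem3
  mem2 i j := by
    rcases i with i | i
    · exact h.mem2 i j
    · exact I.zero_mem
  mem1 i j := by
    rcases i with i | i <;> rcases j with j | j
    · exact h.mem1 i j
    · exact I.zero_mem
    · exact I.zero_mem
    · simpa using I.mul_mem_right _ hzI
  inj := h.inj
  exact2 u := by
    rw [← h.exact2, fromRows_mulVec]
    constructor
    · intro h0
      funext i
      exact congrFun h0 (Sum.inl i)
    · intro h0
      rw [h0]
      funext i
      rcases i with i | i <;> simp
  exact1 v := by
    obtain ⟨v1, v2, rfl⟩ : ∃ v1 v2, v = Sum.elim v1 v2 := ⟨_, _, (Sum.elim_comp_inl_inr v).symm⟩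
    simp only [fromBlocks_mulVec, fromRows_mulVec, zero_mulVec, add_zero, zero_add, smul_mulVec,
      one_mulVec, Sum.elim_comp_inl, Sum.elim_comp_inr]
    constructor
    · intro h0
      obtain ⟨u, hu⟩ := (h.exact1 v1).1 (funext fun i => congrFun h0 (Sum.inl i))
      refine ⟨u, ?_⟩
      have : v2 = 0 := funext fun i => hz _ (congrFun h0 (Sum.inr i))
      rw [hu, this]
    · rintro ⟨u, hu⟩
      have h1 : d2 *ᵥ u = v1 := funext fun i => congrFun hu (Sum.inl i)
      have h2 : 0 = v2 := funext fun i => congrFun hu (Sum.inr i)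
      rw [(h.exact1 v1).2 ⟨u, h1⟩, ← h2]
      funext i
      rcases i with i | i <;> simp

lemma dvd_of_dvd_pow_mul {z y : R} (hy : ∀ a, z ∣ y * a → z ∣ a) (k : ℕ) (a : R)
    (h : z ∣ y ^ k * a) : z ∣ a := by
  induction k with
  | zero => simpa using h
  | succ k ih => exact ih (hy _ (by rwa [← mul_assoc, ← pow_succ']))

lemma pow_dvd_of_dvd_mul {z y : R} (hz : ∀ a, z * a = 0 → a = 0)
    (hy : ∀ a, z ∣ y * a → z ∣ a) (k : ℕ) (a : R) (h : z ^ k ∣ y * a) : z ^ k ∣ a := by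
  induction k generalizing a with
  | zero => simp
  | succ k ih =>
    obtain ⟨b, rfl⟩ := hy a ((dvd_pow_self z k.succ_ne_zero).trans h)
    obtain ⟨e, he⟩ := h
    rw [pow_succ']
    refine mul_dvd_mul_left z (ih b ⟨e, ?_⟩)
    rw [← sub_eq_zero]
    apply hz
    linear_combination he

lemma eq_zero_of_pow_mul {z : R} (hz : ∀ a, z * a = 0 → a = 0) (k : ℕ) (a : R)
    (h : z ^ k * a = 0) : a = 0 := by
  induction k with
  | zero => simpa using h
  | succ k ih => exact ih (hz _ (by rwa [← mul_assoc, ← pow_succ']))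

/-- Let `J` be the image of `d1` (an ideal), with `z ^ k = d1 v ∈ J`. The ideal `y J + (z ^ (k+1))`
is resolved by the mapping cone coming from `y J ∩ (z ^ (k+1)) = (y z ^ (k+1))`; this raises the
rank of the second differential by one and keeps the other two ranks. The cone stays minimal since
`z ^ (k+1)` is `z` times an element of `J`. -/
lemma IsMinAcyclic.add_r2 {β γ δ : Type*} [Fintype β] [Fintype γ] [Fintype δ]
    {d3 : Matrix γ δ R} {d2 : Matrix β γ R} {d1 : Matrix Unit β R}
    (h : IsMinAcyclic I d3 d2 d1) {z y : R} (hzI : z ∈ I) (hyI : y ∈ I)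
    (hz : ∀ a, z * a = 0 → a = 0) (hy : ∀ a, z ∣ y * a → z ∣ a)
    {k : ℕ} {v : β → R} (hv : d1 *ᵥ v = fun _ => z ^ k) :
    IsMinAcyclic I (fromRows d3 (0 : Matrix Unit δ R))
      (fromBlocks d2 (replicateCol Unit (z • v)) (0 : Matrix Unit γ R) (Matrix.of fun _ _ => -y))
      (fromCols (y • d1) (Matrix.of fun _ _ => z ^ (k + 1))) := by
  have e2 : ∀ (u : γ → R) (t : Unit → R),
      (fromBlocks d2 (replicateCol Unit (z • v)) (0 : Matrix Unit γ R) (Matrix.of fun _ _ => -y)) *ᵥ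
        Sum.elim u t = Sum.elim (d2 *ᵥ u + (t () * z) • v) (fun _ => -y * t ()) := by
    intro u t
    simp only [fromBlocks_mulVec, zero_mulVec, zero_add, Sum.elim_comp_inl, Sum.elim_comp_inr]
    congr 1
    · congr 1
      funext i
      simp [mulVec, dotProduct]
      ring
    · funext i
      simp [mulVec, dotProduct]
  have e1 : ∀ (u : β → R) (t : Unit → R),
      (fromCols (y • d1) (Matrix.of fun _ _ => z ^ (k + 1)) : Matrix Unit (β ⊕ Unit) R) *ᵥ
        Sum.elim u t = fun _ => y * (d1 *ᵥ u) () + z ^ (k + 1) * t () := by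
    intro u t
    rw [fromCols_mulVec]
    simp only [smul_mulVec, Sum.elim_comp_inl, Sum.elim_comp_inr]
    funext i
    simp [mulVec, dotProduct]
  have e3 : ∀ w : δ → R, (fromRows d3 (0 : Matrix Unit δ R)) *ᵥ w =
      Sum.elim (d3 *ᵥ w) (fun _ => 0) := by
    intro w
    rw [fromRows_mulVec, zero_mulVec]
    rfl
  refine ⟨?_, ?_, ?_, ?_, ?_, ?_⟩
  · rintro (i | i) j
    · exact h.mem3 i j
    · exact I.zero_mem
  · rintro (i | i) (j | j)
    · exact h.mem2 i j
    · exact I.mul_mem_right _ hzI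
    · exact I.zero_mem
    · exact I.neg_mem hyI
  · rintro i (j | j)
    · exact I.mul_mem_right _ hyI
    · exact I.pow_mem_of_mem hzI _ k.succ_pos
  · intro w hw
    rw [e3] at hw
    exact h.inj w (funext fun i => congrFun hw (Sum.inl i))
  · intro u
    obtain ⟨u, t, rfl⟩ : ∃ v1 v2, u = Sum.elim v1 v2 := ⟨_, _, (Sum.elim_comp_inl_inr u).symm⟩
    simp only [e2, e3]
    constructor
    · intro h0
      have h1 : d2 *ᵥ u + (t () * z) • v = 0 := funext fun i => congrFun h0 (Sum.inl i)
      have ht : t () = 0 := by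
        have h2 := congrArg (fun q => d1 *ᵥ q) h1
        simp only [mulVec_add, mulVec_smul, hv, (h.exact1 _).2 ⟨u, rfl⟩, mulVec_zero] at h2
        have h3 := congrFun h2 ()
        simp only [Pi.add_apply, Pi.zero_apply, Pi.smul_apply, smul_eq_mul, zero_add] at h3
        apply eq_zero_of_pow_mul hz (k + 1)
        linear_combination h3
      rw [ht] at h1
      obtain ⟨w, hw⟩ := (h.exact2 u).1 (by simpa using h1)
      refine ⟨w, ?_⟩
      rw [hw]
      congr 1
      funext i
      exact ht.symm
    · rintro ⟨w, hw⟩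
      have h1 : d3 *ᵥ w = u := funext fun i => congrFun hw (Sum.inl i)
      have ht : 0 = t () := congrFun hw (Sum.inr ())
      rw [(h.exact2 u).2 ⟨w, h1⟩, ← ht]
      funext i
      rcases i with i | i <;> simp
  · intro u
    obtain ⟨u, t, rfl⟩ : ∃ v1 v2, u = Sum.elim v1 v2 := ⟨_, _, (Sum.elim_comp_inl_inr u).symm⟩
    rw [e1]
    constructor
    · intro h0
      have h1 : y * (d1 *ᵥ u) () + z ^ (k + 1) * t () = 0 := congrFun h0 ()
      obtain ⟨s, hs⟩ := pow_dvd_of_dvd_mul hz hy (k + 1) ((d1 *ᵥ u) ())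
        ⟨-t (), by linear_combination h1⟩
      have ht : y * s + t () = 0 := by
        apply eq_zero_of_pow_mul hz (k + 1)
        rw [hs] at h1
        linear_combination h1
      obtain ⟨u', hu'⟩ := (h.exact1 (u - (s * z) • v)).1 (by
        rw [mulVec_sub, mulVec_smul, hv]
        funext i
        simp only [Pi.sub_apply, Pi.smul_apply, Pi.zero_apply, smul_eq_mul]
        have : (d1 *ᵥ u) i = z ^ (k + 1) * s := hs
        rw [this]
        ring)
      refine ⟨Sum.elim u' (fun _ => s), ?_⟩
      rw [e2, hu', sub_add_cancel]
      congr 1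
      funext i
      have : t i = t () := rfl
      rw [this]
      linear_combination -ht
    · rintro ⟨q, hq⟩
      obtain ⟨u', t', rfl⟩ : ∃ v1 v2, q = Sum.elim v1 v2 := ⟨_, _, (Sum.elim_comp_inl_inr q).symm⟩
      rw [e2] at hq
      have h1 : d2 *ᵥ u' + (t' () * z) • v = u := funext fun i => congrFun hq (Sum.inl i)
      have ht : -y * t' () = t () := congrFun hq (Sum.inr ())
      rw [← h1, ← ht, mulVec_add, (h.exact1 _).2 ⟨u', rfl⟩, mulVec_smul, hv]
      funext i
      simp
      ring

/-! ### An acyclicity criterion -/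

lemma smul_cancel {ι : Type*} {z : R} (hz : ∀ a, z * a = 0 → a = 0) {a b : ι → R}
    (h : z • a = z • b) : a = b := by
  funext i
  rw [← sub_eq_zero]
  apply hz
  have := congrFun h i
  simp only [Pi.smul_apply, smul_eq_mul] at this
  linear_combination this

/-- Acyclicity of `0 → R^δ → R^γ → R^β → R^α` from exactness after multiplying by powers of `z`
(at `R^γ`), and by powers of `z` and by an element `U ≡ y ^ m` modulo `z` (at `R^β`). The injectivity
of `d3` modulo `z` and modulo `(z, y)` says that `z, y` is a regular sequence on the cokernel of
`d3`, which allows both multipliers to be cancelled. -/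
lemma exact_of_exact_away {α β γ δ : Type*} [Fintype β] [Fintype γ] [Fintype δ]
    {d3 : Matrix γ δ R} {d2 : Matrix β γ R} {d1 : Matrix α β R} {z y U s : R} {m n : ℕ}
    (hz : ∀ a, z * a = 0 → a = 0) (hy : ∀ a, z ∣ y * a → z ∣ a)
    (hU : U = y ^ m + z * s)
    (h23 : ∀ w, d2 *ᵥ (d3 *ᵥ w) = 0)
    (hmod1 : ∀ w p, d3 *ᵥ w = z • p → ∃ w', w = z • w')
    (hmod2 : ∀ w p q, d3 *ᵥ w = z • p + y • q → ∃ w' w'', w = z • w' + y • w'')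
    (hloc2 : ∀ u, d2 *ᵥ u = 0 → ∃ w, d3 *ᵥ w = z ^ n • u)
    (hloc1 : ∀ v, d1 *ᵥ v = 0 → ∃ u, d2 *ᵥ u = z ^ n • v)
    (hloc1' : ∀ v, d1 *ᵥ v = 0 → ∃ u, d2 *ᵥ u = U • v) :
    (∀ u, d2 *ᵥ u = 0 → ∃ w, d3 *ᵥ w = u) ∧ (∀ v, d1 *ᵥ v = 0 → ∃ u, d2 *ᵥ u = v) := by
  have ex2 : ∀ u, d2 *ᵥ u = 0 → ∃ w, d3 *ᵥ w = u := by
    intro u hu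
    have key : ∀ n, (∃ w, d3 *ᵥ w = z ^ n • u) → ∃ w, d3 *ᵥ w = u := by
      intro n
      induction n with
      | zero => simp
      | succ n ih =>
        rintro ⟨w, hw⟩
        rw [pow_succ', mul_smul] at hw
        obtain ⟨w', rfl⟩ := hmod1 w _ hw
        rw [mulVec_smul] at hw
        exact ih ⟨w', smul_cancel hz hw⟩
    exact key n (hloc2 u hu)
  -- `y` is a nonzerodivisor on the cokernel of `d3` modulo `z`
  have regy : ∀ (k : ℕ) (u : γ → R), (∃ p w, y ^ k • u = z • p + d3 *ᵥ w) →
      ∃ p w, u = z • p + d3 *ᵥ w := by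
    intro k
    induction k with
    | zero => simp
    | succ k ih =>
      rintro u ⟨p, w, h⟩
      apply ih
      obtain ⟨w1, w2, rfl⟩ := hmod2 w (-p) (y ^ k • u) (by
        rw [smul_smul, ← pow_succ', h, smul_neg]
        abel)
      have hdiv : ∀ i, z ∣ (y ^ k • u - d3 *ᵥ w2) i := by
        intro i
        apply hy
        refine ⟨(p + d3 *ᵥ w1) i, ?_⟩
        have := congrFun h i
        simp only [mulVec_add, mulVec_smul, Pi.add_apply, Pi.smul_apply, smul_eq_mul,
          Pi.sub_apply] at this ⊢
        linear_combination this
      choose p' hp' using hdiv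
      refine ⟨p', w2, ?_⟩
      funext i
      have := hp' i
      simp only [Pi.add_apply, Pi.smul_apply, smul_eq_mul, Pi.sub_apply] at this ⊢
      linear_combination this
  refine ⟨ex2, fun v hv => ?_⟩
  obtain ⟨u2, hu2⟩ := hloc1' v hv
  have key : ∀ n, (∃ u, d2 *ᵥ u = z ^ n • v) → ∃ u, d2 *ᵥ u = v := by
    intro n
    induction n with
    | zero => simp
    | succ n ih =>
      rintro ⟨u1, hu1⟩
      apply ih
      obtain ⟨w, hw⟩ := ex2 (U • u1 - z ^ (n + 1) • u2) (by
        rw [mulVec_sub, mulVec_smul, mulVec_smul, hu1, hu2, smul_comm, sub_self])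
      obtain ⟨p, q, hpq⟩ := regy m u1 ⟨z ^ n • u2 - s • u1, w, by
        rw [hw, hU]
        funext i
        simp only [Pi.add_apply, Pi.smul_apply, smul_eq_mul, Pi.sub_apply]
        ring⟩
      refine ⟨p, smul_cancel hz ?_⟩
      rw [hpq, mulVec_add, h23, add_zero, mulVec_smul, pow_succ', mul_smul] at hu1
      exact hu1
  exact key n (hloc1 v hv)

/-! ### Ideals with three generators -/

/-- The determinant of the `(n - 1) × (n - 1)` tridiagonal Toeplitz matrix with diagonal `y` and
off-diagonal entries `x` and `z` (a rescaled Chebyshev polynomial of the second kind), with value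
`0` at `n = 0`. -/
def cheb (x y z : R) : ℕ → R
  | 0 => 0
  | 1 => 1
  | n + 2 => y * cheb x y z (n + 1) - x * z * cheb x y z n

lemma cheb_mem {x y z : R} (hx : x ∈ I) (hy : y ∈ I) (n : ℕ) : cheb x y z (n + 2) ∈ I := by
  rw [cheb]
  exact I.sub_mem (I.mul_mem_right _ hy) (I.mul_mem_right _ (I.mul_mem_right _ hx))

lemma cheb_mod (x y z : R) (n : ℕ) : ∃ s, cheb x y z (n + 1) = y ^ n + z * s := by
  induction n with
  | zero => exact ⟨0, by simp [cheb]⟩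
  | succ n ih =>
    obtain ⟨s, hs⟩ := ih
    refine ⟨y * s - x * cheb x y z n, ?_⟩
    rw [cheb, hs]
    ring

/-- The banded `(c + 2) × c` matrix with `x, -y, z` in each column; its maximal minors generate
`(x, y, z) ^ c`. -/
def band (x y z : R) (c : ℕ) : Matrix (Fin (c + 2)) (Fin c) R :=
  Matrix.of fun l i => (if l.1 = i.1 then x else 0) + (if l.1 = i.1 + 1 then -y else 0) +
    (if l.1 = i.1 + 2 then z else 0)

/-- The vector `w` with indices shifted by two and extended by zero to `ℕ`. -/
def ext2 {c : ℕ} (w : Fin c → R) (n : ℕ) : R :=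
  if h : 2 ≤ n ∧ n < c + 2 then w ⟨n - 2, by omega⟩ else 0

lemma ext2_eq {c : ℕ} (w : Fin c → R) (i : Fin c) : ext2 w (i + 2) = w i := by
  simp [ext2]

lemma sum_ite_ext2 {c : ℕ} (w : Fin c → R) (a : R) (l k n : ℕ) (hn : n + k = l + 2) :
    ∑ i : Fin c, (if l = i.1 + k then a else 0) * w i = a * ext2 w n := by
  unfold ext2
  split_ifs with h
  · rw [Finset.sum_eq_single (⟨n - 2, by omega⟩ : Fin c)]
    · rw [if_pos (by simp only; omega)]
    · intro b _ hb
      rw [if_neg, zero_mul]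
      intro h'
      apply hb
      ext
      simp only
      omega
    · simp
  · rw [mul_zero]
    apply Finset.sum_eq_zero
    intro i _
    rw [if_neg (by omega), zero_mul]

lemma band_mulVec (x y z : R) {c : ℕ} (w : Fin c → R) (l : Fin (c + 2)) :
    (band x y z c *ᵥ w) l = x * ext2 w (l + 2) - y * ext2 w (l + 1) + z * ext2 w l := by
  simp only [mulVec, dotProduct, band, Matrix.of_apply, add_mul, Finset.sum_add_distrib]
  rw [sum_ite_ext2 w _ l.1 1 (l.1 + 1) (by omega), sum_ite_ext2 w _ l.1 2 l.1 (by omega)]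
  have := sum_ite_ext2 w x l.1 0 (l.1 + 2) (by omega)
  simp only [add_zero] at this
  rw [this]
  ring

lemma vecMul_band (x y z : R) {c : ℕ} (a : ℕ → R) (i : Fin c) :
    ∑ l : Fin (c + 2), a l * band x y z c l i = x * a i - y * a (i + 1) + z * a (i + 2) := by
  have key : ∀ (k : ℕ) (b : R), k ≤ 2 →
      ∑ l : Fin (c + 2), a l * (if l.1 = i.1 + k then b else 0) = a (i + k) * b := by
    intro k b hk
    rw [Finset.sum_eq_single (⟨i + k, by omega⟩ : Fin (c + 2))]
    · simp
    · intro l _ hl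
      rw [if_neg, mul_zero]
      intro h'
      apply hl
      ext
      exact h'
    · simp
  have k0 := key 0 x (by omega)
  simp only [add_zero] at k0
  simp only [band, Matrix.of_apply, mul_add, Finset.sum_add_distrib]
  rw [k0, key 1 _ (by omega), key 2 _ (by omega)]
  ring

/-- First row of the second differential. -/
def row0 (x y z : R) (c l : ℕ) : R := x ^ l * cheb x y z (c + 1 - l)

/-- Second row of the second differential. The value `-z ^ c` at `l = 0` is the one dictated by
running the recurrence of `row_rec` backwards. -/
def row1 (x y z : R) (c : ℕ) : ℕ → R
  | 0 => -z ^ c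
  | l + 1 => x * cheb x y z l * z ^ (c - l)

/-- Third row of the second differential. -/
def row2 (x y z : R) (c l : ℕ) : R := -(cheb x y z l * z ^ (c + 1 - l))

/-- The rows `row0`, `row1`, `row2` of the second differential annihilate `band x y z c`. -/
lemma row_rec (x y z : R) {c i : ℕ} (hi : i < c) :
    x * row0 x y z c i - y * row0 x y z c (i + 1) + z * row0 x y z c (i + 2) = 0 ∧
    x * row1 x y z c i - y * row1 x y z c (i + 1) + z * row1 x y z c (i + 2) = 0 ∧
    x * row2 x y z c i - y * row2 x y z c (i + 1) + z * row2 x y z c (i + 2) = 0 := by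
  obtain ⟨m, rfl⟩ : ∃ m, c = i + 1 + m := ⟨c - (i + 1), by omega⟩
  refine ⟨?_, ?_, ?_⟩
  · simp only [row0]
    rw [show i + 1 + m + 1 - i = m + 2 by omega, show i + 1 + m + 1 - (i + 1) = m + 1 by omega,
      show i + 1 + m + 1 - (i + 2) = m by omega, cheb]
    ring
  · rcases i with _ | i
    · simp only [row1, cheb]
      rw [show 0 + 1 + m - (0 + 1) = m by omega]
      ring
    · simp only [row1]
      rw [show i + 1 + 1 + m - i = m + 2 by omega, show i + 1 + 1 + m - (i + 1) = m + 1 by omega,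
        show i + 1 + 1 + m - (i + 1 + 1) = m by omega, cheb]
      ring
  · simp only [row2]
    rw [show i + 1 + m + 1 - i = m + 2 by omega, show i + 1 + m + 1 - (i + 1) = m + 1 by omega,
      show i + 1 + m + 1 - (i + 2) = m by omega, cheb]
    ring

/-- The columns of the second differential are relations between the three generators
`z ^ c`, `cheb (c + 1)`, `x * cheb c`. -/
lemma gen_rel (x y z : R) (hz : ∀ a, z * a = 0 → a = 0) (c l : ℕ) (hl : l < c + 2) :
    z ^ c * row0 x y z c l + cheb x y z (c + 1) * row1 x y z c l +
      x * cheb x y z c * row2 x y z c l = 0 := by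
  induction l using Nat.strong_induction_on with
  | _ l ih =>
    rcases l with _ | _ | l
    · simp [row0, row1, row2, cheb]
      ring
    · simp [row0, row1, row2, cheb]
      ring
    · obtain ⟨h0, h1, h2⟩ := row_rec x y z (c := c) (i := l) (by omega)
      have e0 := ih l (by omega) (by omega)
      have e1 := ih (l + 1) (by omega) (by omega)
      -- the left-hand side satisfies the recurrence of `row_rec`, hence vanishes identically
      apply hz
      linear_combination z ^ c * h0 + cheb x y z (c + 1) * h1 + x * cheb x y z c * h2 - x * e0 +
        y * e1

/-- The second differential. -/
def mid (x y z : R) (c : ℕ) : Matrix (Fin 3) (Fin (c + 2)) R :=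
  Matrix.of ![fun l => row0 x y z c l, fun l => row1 x y z c l, fun l => row2 x y z c l]

/-- The row of three generators. -/
def gens (x y z : R) (c : ℕ) : Matrix Unit (Fin 3) R :=
  Matrix.of fun _ => ![z ^ c, cheb x y z (c + 1), x * cheb x y z c]

lemma gens_mulVec (x y z : R) (c : ℕ) (v : Fin 3 → R) (i : Unit) :
    (gens x y z c *ᵥ v) i =
      z ^ c * v 0 + cheb x y z (c + 1) * v 1 + x * cheb x y z c * v 2 := by
  simp [gens, mulVec, dotProduct, Fin.sum_univ_three]

lemma mid_mul_band (x y z : R) (c : ℕ) : mid x y z c * band x y z c = 0 := by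
  ext r i
  rw [Matrix.mul_apply, Matrix.zero_apply]
  obtain ⟨h0, h1, h2⟩ := row_rec x y z i.2
  fin_cases r
  · exact (vecMul_band x y z (row0 x y z c) i).trans h0
  · exact (vecMul_band x y z (row1 x y z c) i).trans h1
  · exact (vecMul_band x y z (row2 x y z c) i).trans h2

lemma gens_mul_mid (x y z : R) (hz : ∀ a, z * a = 0 → a = 0) (c : ℕ) :
    gens x y z c * mid x y z c = 0 := by
  ext r l
  rw [Matrix.mul_apply, Matrix.zero_apply, Fin.sum_univ_three]
  exact gen_rel x y z hz c l l.2

/-- Multiplication by `z ^ k` allows the last `k` of the `c + 2` entries to be eliminated modulo the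
columns of `band x y z c`. -/
lemma eliminate (x y z : R) {c : ℕ} (u : Fin (c + 2) → R) (k : ℕ) (hk : k ≤ c) :
    ∃ w r, z ^ k • u = band x y z c *ᵥ w + r ∧ ∀ l : Fin (c + 2), c + 2 ≤ l + k → r l = 0 := by
  induction k with
  | zero => exact ⟨0, u, by simp, fun l hl => absurd l.2 (by omega)⟩
  | succ k ih =>
    obtain ⟨w, r, h, hr⟩ := ih (by omega)
    obtain ⟨m, hm⟩ : ∃ m, c = m + 1 + k := ⟨c - (k + 1), by omega⟩
    let j : Fin c := ⟨m, by omega⟩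
    refine ⟨z • w + Pi.single j (r ⟨m + 2, by omega⟩),
      z • r - band x y z c *ᵥ Pi.single j (r ⟨m + 2, by omega⟩), ?_, ?_⟩
    · rw [pow_succ', mul_smul, h, smul_add, mulVec_add, mulVec_smul]
      abel
    · intro l hl
      simp only [mulVec_single, Pi.sub_apply, Pi.smul_apply, smul_eq_mul, band, Matrix.of_apply,
        Matrix.col_apply, MulOpposite.smul_eq_mul_unop, MulOpposite.unop_op, j]
      by_cases hl' : l.1 = m + 2
      · have : l = ⟨m + 2, by omega⟩ := Fin.ext hl'
        rw [← this, if_neg (by omega), if_neg (by omega), if_pos hl']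
        ring
      · rw [hr l (by omega), if_neg (by omega), if_neg (by omega), if_neg (by omega)]
        simp

/-- The base complexes, with `c` third syzygies: the ideal
`(z ^ c, cheb (c + 1), x * cheb c)` is resolved by `band` and `mid`. For `c = 1` this is the Koszul
complex. -/
lemma isMinAcyclic_gens {x y z : R} (hxI : x ∈ I) (hyI : y ∈ I) (hzI : z ∈ I)
    (hz : ∀ a, z * a = 0 → a = 0) (hy : ∀ a, z ∣ y * a → z ∣ a)
    (hx : ∀ a, (∃ p q, x * a = z * p + y * q) → ∃ p q, a = z * p + y * q)
    {c : ℕ} (hc : 1 ≤ c) :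
    IsMinAcyclic I (band x y z c) (mid x y z c) (gens x y z c) := by
  have h23 : ∀ w, mid x y z c *ᵥ (band x y z c *ᵥ w) = 0 := by
    intro w
    rw [mulVec_mulVec, mid_mul_band, zero_mulVec]
  have h12 : ∀ u, gens x y z c *ᵥ (mid x y z c *ᵥ u) = 0 := by
    intro w
    rw [mulVec_mulVec, gens_mul_mid x y z hz, zero_mulVec]
  obtain ⟨s, hs⟩ := cheb_mod x y z c
  have ext2_top : ∀ (w : Fin c → R) n, c + 2 ≤ n → ext2 w n = 0 := by
    intro w n hn
    rw [ext2, dif_neg (by omega)]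
  have chebI : cheb x y z (c + 1) ∈ I := by
    obtain ⟨m, rfl⟩ : ∃ m, c = m + 1 := ⟨c - 1, by omega⟩
    exact cheb_mem hxI hyI m
  have zpow : ∀ n, 0 < n → z ^ n ∈ I := fun n hn => I.pow_mem_of_mem hzI _ hn
  -- a combination of columns `0` and `1`, and one of columns `0` and `c + 1`, of `mid`
  have col01 : ∀ p q : R, mid x y z c *ᵥ (Pi.single 0 p + Pi.single 1 q) =
      ![cheb x y z (c + 1) * p + x * cheb x y z c * q, -z ^ c * p, -z ^ c * q] := by
    intro p q
    funext r
    fin_cases r <;> simp [mulVec_add, mulVec_single, mid, row0, row1, row2, cheb] <;> ring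
  have col0l : ∀ p q : R, mid x y z c *ᵥ (Pi.single 0 p + Pi.single (Fin.last (c + 1)) q) =
      ![cheb x y z (c + 1) * p, -z ^ c * p + x * cheb x y z c * q, - cheb x y z (c + 1) * q] := by
    intro p q
    funext r
    fin_cases r <;> simp [mulVec_add, mulVec_single, mid, row0, row1, row2, cheb] <;> ring
  have main := exact_of_exact_away (d3 := band x y z c) (d2 := mid x y z c)
    (d1 := gens x y z c) (n := c) hz hy hs h23 ?_ ?_ ?_ ?_ ?_
  · refine ⟨?_, ?_, ?_, ?_, ?_, ?_⟩
    · intro l i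
      simp only [band, Matrix.of_apply]
      refine I.add_mem (I.add_mem ?_ ?_) ?_ <;> split_ifs <;> simp [hxI, hyI, hzI]
    · intro r l
      fin_cases r
      · change row0 x y z c l ∈ I
        rw [row0]
        by_cases hl : l.1 = 0
        · rw [hl]
          exact I.mul_mem_left _ chebI
        · exact I.mul_mem_right _ (I.pow_mem_of_mem hxI _ (by omega))
      · change row1 x y z c l ∈ I
        rcases l.1 with _ | k
        · exact I.neg_mem (zpow c hc)
        · exact I.mul_mem_right _ (I.mul_mem_right _ hxI)
      · change row2 x y z c l ∈ I
        rw [row2]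
        refine I.neg_mem ?_
        by_cases hl : l.1 = c + 1
        · rw [hl]
          exact I.mul_mem_right _ chebI
        · exact I.mul_mem_left _ (zpow _ (by omega))
    · intro r l
      fin_cases l
      · exact zpow c hc
      · exact chebI
      · exact I.mul_mem_right _ hxI
    · intro w hw
      have key : ∀ j n, c + 2 ≤ n + j → ext2 w n = 0 := by
        intro j
        induction j with
        | zero => exact fun n hn => ext2_top w n (by omega)
        | succ j ih =>
          intro n hn
          by_cases hn2 : n < c + 2
          · have h := band_mulVec x y z w ⟨n, hn2⟩
            rw [hw] at h
            simp only [ih (n + 1) (by omega), ih (n + 2) (by omega), Pi.zero_apply] at h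
            apply hz
            linear_combination -h
          · exact ext2_top w n (by omega)
      funext i
      rw [← ext2_eq w i]
      exact key (c + 2) _ (by omega)
    · exact fun u => ⟨main.1 u, by rintro ⟨w, rfl⟩; exact h23 w⟩
    · exact fun u => ⟨main.2 u, by rintro ⟨w, rfl⟩; exact h12 w⟩
  · intro w p hp
    have key : ∀ j n, 2 ≤ n → c + 2 ≤ n + j → z ∣ ext2 w n := by
      intro j
      induction j with
      | zero =>
        intro n _ hn
        rw [ext2_top w n (by omega)]
        exact dvd_zero z
      | succ j ih =>
        intro n h2n hn
        by_cases hn2 : n < c + 2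
        · obtain ⟨m, rfl⟩ : ∃ m, n = m + 1 := ⟨n - 1, by omega⟩
          have h := band_mulVec x y z w ⟨m, by omega⟩
          rw [hp] at h
          obtain ⟨e, he⟩ := ih (m + 2) (by omega) (by omega)
          simp only [he, Pi.smul_apply, smul_eq_mul] at h
          apply hy
          exact ⟨x * e + ext2 w m - p ⟨m, by omega⟩, by linear_combination h⟩
        · rw [ext2_top w n (by omega)]
          exact dvd_zero z
    have : ∀ i, z ∣ w i := fun i => by
      rw [← ext2_eq w i]
      exact key (c + 2) _ (by omega) (by omega)
    choose w' hw' using this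
    exact ⟨w', funext hw'⟩
  · intro w p q hpq
    have : ∀ i, ∃ a b, w i = z * a + y * b := by
      intro i
      apply hx
      have h := band_mulVec x y z w ⟨i, by omega⟩
      rw [hpq] at h
      simp only [ext2_eq, Pi.add_apply, Pi.smul_apply, smul_eq_mul] at h
      exact ⟨p ⟨i, by omega⟩ - ext2 w i, q ⟨i, by omega⟩ + ext2 w (i + 1), by
        linear_combination -h⟩
    choose a b hab using this
    exact ⟨a, b, funext hab⟩
  · intro u hu
    obtain ⟨w, r, h, hr⟩ := eliminate x y z u c le_rfl
    have hr' : r = Pi.single 0 (r 0) + Pi.single 1 (r 1) := by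
      funext l
      by_cases h0 : l = 0
      · subst h0
        simp
      · by_cases h1 : l = 1
        · subst h1
          simp
        · rw [hr l]
          · simp [h0, h1]
          · have h0' : l.1 ≠ 0 := fun h' => h0 (Fin.ext h')
            have h1' : l.1 ≠ 1 := fun h' => h1 (Fin.ext (by simpa using h'))
            omega
    have hr0 : mid x y z c *ᵥ r = 0 := by
      have := congrArg (fun q => mid x y z c *ᵥ q) h
      simpa [mulVec_add, mulVec_smul, hu, h23] using this.symm
    rw [hr', col01] at hr0
    have z0 : r 0 = 0 := eq_zero_of_pow_mul hz c _ (by simpa using congrFun hr0 1)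
    have z1 : r 1 = 0 := eq_zero_of_pow_mul hz c _ (by simpa using congrFun hr0 2)
    refine ⟨w, ?_⟩
    rw [h, hr', z0, z1]
    simp
  · intro v hv
    have h := gens_mulVec x y z c v ()
    rw [hv, Pi.zero_apply] at h
    refine ⟨Pi.single 0 (-v 1) + Pi.single 1 (-v 2), ?_⟩
    rw [col01]
    funext r
    fin_cases r <;> simp
    linear_combination h
  · intro v hv
    have h := gens_mulVec x y z c v ()
    rw [hv, Pi.zero_apply] at h
    refine ⟨Pi.single 0 (v 0) + Pi.single (Fin.last (c + 1)) (-v 2), ?_⟩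
    rw [col0l]
    funext r
    fin_cases r <;> simp
    linear_combination h

/-! ### All formats -/

/-- Formats `(1, n + 3, c + 2 + n, c)`, by iterating `IsMinAcyclic.add_r2`; the induction carries
along a power of `z` in the image of `d1`. -/
lemma exists_rank_one {x y z : R} (hxI : x ∈ I) (hyI : y ∈ I) (hzI : z ∈ I)
    (hz : ∀ a, z * a = 0 → a = 0) (hy : ∀ a, z ∣ y * a → z ∣ a)
    (hx : ∀ a, (∃ p q, x * a = z * p + y * q) → ∃ p q, a = z * p + y * q)
    {c : ℕ} (hc : 1 ≤ c) (n : ℕ) :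
    ∃ (β γ : Type) (_ : Fintype β) (_ : Fintype γ), Fintype.card β = n + 3 ∧
      Fintype.card γ = c + 2 + n ∧
      ∃ (d3 : Matrix γ (Fin c) R) (d2 : Matrix β γ R) (d1 : Matrix Unit β R),
        IsMinAcyclic I d3 d2 d1 ∧ ∃ (k : ℕ) (v : β → R), d1 *ᵥ v = fun _ => z ^ k := by
  induction n with
  | zero =>
    refine ⟨Fin 3, Fin (c + 2), inferInstance, inferInstance, by simp, by simp, _, _, _,
      isMinAcyclic_gens hxI hyI hzI hz hy hx hc, c, ![1, 0, 0], ?_⟩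
    funext i
    rw [gens_mulVec]
    simp
  | succ n ih =>
    obtain ⟨β, γ, _, _, hβ, hγ, d3, d2, d1, h, k, v, hv⟩ := ih
    refine ⟨β ⊕ Unit, γ ⊕ Unit, inferInstance, inferInstance, by simp [hβ],
      by simp [hγ]; omega, _, _, _, h.add_r2 hzI hyI hz hy hv, k + 1, Sum.elim 0 1, ?_⟩
    rw [fromCols_mulVec]
    funext i
    simp [mulVec, dotProduct]

/-- The elementwise form of a regular sequence of length three. -/
lemma isRegSeq_three {t : Fin 3 → R} (h : IsRegSeq t) :
    (∀ a, t 0 * a = 0 → a = 0) ∧ (∀ a, t 0 ∣ t 1 * a → t 0 ∣ a) ∧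
    (∀ a, (∃ p q, t 2 * a = t 0 * p + t 1 * q) → ∃ p q, a = t 0 * p + t 1 * q) := by
  have key : ∀ (i : Fin 3) (a : R),
      t i * a ∈ Ideal.span (Set.range fun j : Fin (i : ℕ) => t ⟨(j : ℕ), j.isLt.trans i.isLt⟩) →
      a ∈ Ideal.span (Set.range fun j : Fin (i : ℕ) => t ⟨(j : ℕ), j.isLt.trans i.isLt⟩) := by
    intro i a ha
    rw [← Ideal.Quotient.eq_zero_iff_mem] at ha ⊢
    apply h i
    simp only [smul_zero]
    rw [← ha, Algebra.smul_def, map_mul]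
    rfl
  have e0 : (Set.range fun j : Fin ((0 : Fin 3) : ℕ) =>
      t ⟨(j : ℕ), j.isLt.trans (0 : Fin 3).isLt⟩) = ∅ := by
    ext b
    simp only [Set.mem_range, Set.mem_empty_iff_false, iff_false, not_exists]
    exact fun j => absurd j.2 (by simp)
  have e1 : (Set.range fun j : Fin ((1 : Fin 3) : ℕ) =>
      t ⟨(j : ℕ), j.isLt.trans (1 : Fin 3).isLt⟩) = {t 0} := by
    change (Set.range fun j : Fin 1 => t ⟨(j : ℕ), _⟩) = {t 0}
    ext b
    simp
  have e2 : (Set.range fun j : Fin ((2 : Fin 3) : ℕ) =>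
      t ⟨(j : ℕ), j.isLt.trans (2 : Fin 3).isLt⟩) = {t 0, t 1} := by
    change (Set.range fun j : Fin 2 => t ⟨(j : ℕ), _⟩) = {t 0, t 1}
    ext b
    simp only [Set.mem_range, Fin.exists_fin_two, Set.mem_insert_iff, Set.mem_singleton_iff]
    exact or_congr eq_comm eq_comm
  have k0 := key 0
  have k1 := key 1
  have k2 := key 2
  rw [e0] at k0
  rw [e1] at k1
  rw [e2] at k2
  simp only [Ideal.span_empty, Ideal.mem_bot, Ideal.mem_span_singleton] at k0 k1
  refine ⟨k0, k1, fun a ⟨p, q, hpq⟩ => ?_⟩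
  obtain ⟨p', q', h'⟩ := Ideal.mem_span_pair.1
    (k2 a (Ideal.mem_span_pair.2 ⟨p, q, by rw [hpq]; ring⟩))
  exact ⟨p', q', by rw [← h']; ring⟩

end MinimalComplex

theorem exists_minimal_acyclic_complex_of_valid_format
    {R : Type*} [CommRing R] [IsNoetherianRing R] [IsLocalRing R]
    (hdepth : GradeGE (IsLocalRing.maximalIdeal R) 3)
    (f0 f1 f2 f3 : ℕ) (h0 : 0 < f0) (h1 : 0 < f1) (h2 : 0 < f2) (h3 : 0 < f3)
    -- Euler characteristic zero
    (hchi : (f0 : ℤ) - f1 + f2 - f3 = 0)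
    -- valid format: the ranks `r₃ = f₃`, `r₂ = f₂ - f₃`, `r₁ = f₁ - f₂ + f₃` are
    -- nonnegative (and then `r₁ ≤ f₀` follows from `χ = 0`)
    (hr3 : f3 ≤ f2) (hr1 : (f2 : ℤ) - f3 ≤ f1)
    -- `r₂ > 1`
    (hr2 : 1 < f2 - f3) :
    ∃ (d3 : Matrix (Fin f2) (Fin f3) R) (d2 : Matrix (Fin f1) (Fin f2) R)
      (d1 : Matrix (Fin f0) (Fin f1) R),
      -- minimality …
      (∀ i j, d3 i j ∈ IsLocalRing.maximalIdeal R) ∧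
      (∀ i j, d2 i j ∈ IsLocalRing.maximalIdeal R) ∧
      (∀ i j, d1 i j ∈ IsLocalRing.maximalIdeal R) ∧
      -- … and acyclicity
      Function.Injective (Matrix.mulVecLin d3) ∧
      LinearMap.ker (Matrix.mulVecLin d2) = LinearMap.range (Matrix.mulVecLin d3) ∧
      LinearMap.ker (Matrix.mulVecLin d1) = LinearMap.range (Matrix.mulVecLin d2) := by
  classical
  obtain ⟨t, htI, ht⟩ := hdepth
  obtain ⟨hz, hy, hx⟩ := MinimalComplex.isRegSeq_three ht
  obtain ⟨n, hn⟩ : ∃ n, f2 = f3 + 2 + n := ⟨f2 - f3 - 2, by omega⟩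
  obtain ⟨β, γ, _, _, hβ, hγ, d3, d2, d1, h, -⟩ := MinimalComplex.exists_rank_one (htI 2) (htI 1)
    (htI 0) hz hy hx (c := f3) h3 n
  have h' := h.add_r1 (ε := Fin (f0 - 1)) (htI 0) hz
  have ea : Fin f0 ≃ Unit ⊕ Fin (f0 - 1) := Fintype.equivOfCardEq (by simp; omega)
  have eb : Fin f1 ≃ β ⊕ Fin (f0 - 1) := Fintype.equivOfCardEq (by simp [hβ]; omega)
  have ec : Fin f2 ≃ γ := Fintype.equivOfCardEq (by simp [hγ]; omega)
  have H := h'.reindex ea eb ec (Equiv.refl (Fin f3))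
  refine ⟨_, _, _, H.mem3, H.mem2, H.mem1, ?_, ?_, ?_⟩
  · rw [← LinearMap.ker_eq_bot, LinearMap.ker_eq_bot']
    exact H.inj
  · ext u
    exact H.exact2 u
  · ext u
    exact H.exact1 u
end
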